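/- arXiv:2102.09522 — 5 statements merged into one kernel-verified Lean document; each statement's English description precedes it below -/
import Mathlib

section
/- Let q ≥ 1 and 0 ≤ k ≤ 2q−1. Let H_q ≤ S_{2q} be the hyperoctahedral subgroup on the pairs P_i = {2i−1, 2i} (i = 1,…,q), with character L_q. Then the subspace { v ∈ Λ^k U_{2q} : g·v = L_q(g)·v for all g ∈ H_q } of the k-th exterior power of the standard representation of S_{2q} over ℚ has dimension 1 if k = q−1, and dimension 0 otherwise. -/
noncomputable section

/-- The sum-of-coordinates linear functional on `ℚ^N`. -/
def sumMap (N : ℕ) : (Fin N → ℚ) →ₗ[ℚ] ℚ := ∑ i, LinearMap.proj i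

/-- The standard representation `U_N = {x ∈ ℚ^N : ∑ x_i = 0}` of the symmetric group. -/
def U (N : ℕ) : Submodule ℚ (Fin N → ℚ) := LinearMap.ker (sumMap N)

lemma mem_U {N : ℕ} (x : Fin N → ℚ) : x ∈ U N ↔ ∑ i, x i = 0 := by
  simp [U, sumMap, LinearMap.mem_ker]

/-- The action of a permutation on `ℚ^N` by permuting coordinates. -/
def permMap (N : ℕ) (σ : Equiv.Perm (Fin N)) : (Fin N → ℚ) →ₗ[ℚ] (Fin N → ℚ) :=
  LinearMap.funLeft ℚ ℚ ⇑σ⁻¹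

lemma permMap_mem {N : ℕ} (σ : Equiv.Perm (Fin N)) {x : Fin N → ℚ} (hx : x ∈ U N) :
    permMap N σ x ∈ U N := by
  rw [mem_U] at hx ⊢
  simpa [permMap, LinearMap.funLeft_apply, Function.comp] using
    (Equiv.sum_comp σ⁻¹ x).trans hx

/-- The action of a permutation on the standard representation `U_N`. -/
def permU (N : ℕ) (σ : Equiv.Perm (Fin N)) : ↥(U N) →ₗ[ℚ] ↥(U N) :=
  (permMap N σ).restrict fun _ hx => permMap_mem σ hx

/-- The induced (diagonal) action on the exterior algebra of `U_N`; it preserves each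
exterior power `⋀[ℚ]^k U_N`. -/
def act (N : ℕ) (σ : Equiv.Perm (Fin N)) :
    ExteriorAlgebra ℚ ↥(U N) →ₗ[ℚ] ExteriorAlgebra ℚ ↥(U N) :=
  (ExteriorAlgebra.map (permU N σ)).toLinearMap

/-- The eigenspace of a linear endomorphism for the eigenvalue `c`. -/
def eigen {V : Type*} [AddCommGroup V] [Module ℚ V] (f : V →ₗ[ℚ] V) (c : ℚ) :
    Submodule ℚ V := LinearMap.ker (f - c • LinearMap.id)

/-- `g` belongs to the hyperoctahedral subgroup of `S_N` on the `q` pairs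
`{a+2i, a+2i+1}` (`0 ≤ i < q`), inducing the permutation `τ` on the set of pairs:
`g` fixes every letter outside the pairs, and sends the `i`-th pair to the `τ(i)`-th pair. -/
def IsHypAt (a : ℕ) {N q : ℕ} (g : Equiv.Perm (Fin N)) (τ : Equiv.Perm (Fin q)) : Prop :=
  (∀ i : Fin N, ((i : ℕ) < a ∨ a + 2*q ≤ (i : ℕ)) → g i = i) ∧
  ∀ i : Fin N, ∀ _h1 : a ≤ (i : ℕ), ∀ _h2 : (i : ℕ) < a + 2*q,
    ((g i : ℕ) - a)/2 = ((τ ⟨((i : ℕ) - a)/2, by omega⟩ : Fin q) : ℕ)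

end


namespace HypHook

open Module

section general
variable {V : Type*} [AddCommGroup V] [Module ℚ V]

lemma wedge_sub (m : V) : ∀ (n : ℕ) (u : Fin n → V),
    ExteriorAlgebra.ι ℚ m * ExteriorAlgebra.ιMulti ℚ n (fun i => u i - m) =
      ExteriorAlgebra.ι ℚ m * ExteriorAlgebra.ιMulti ℚ n u := by
  intro n
  induction n with
  | zero => intro u; simp
  | succ n ih =>
    intro u
    have ih' := ih (Matrix.vecTail u)
    have e : Matrix.vecTail (fun i => u i - m) = fun i => Matrix.vecTail u i - m := rfl
    rw [ExteriorAlgebra.ιMulti_succ_apply, ExteriorAlgebra.ιMulti_succ_apply, e]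
    have hm : ExteriorAlgebra.ι ℚ m * ExteriorAlgebra.ι ℚ (u 0) =
        - (ExteriorAlgebra.ι ℚ (u 0) * ExteriorAlgebra.ι ℚ m) :=
      eq_neg_of_add_eq_zero_left (ExteriorAlgebra.ι_add_mul_swap m (u 0))
    have hmm : ExteriorAlgebra.ι ℚ m * ExteriorAlgebra.ι ℚ (u 0 - m) =
        ExteriorAlgebra.ι ℚ m * ExteriorAlgebra.ι ℚ (u 0) := by
      rw [map_sub, mul_sub, ExteriorAlgebra.ι_sq_zero, sub_zero]
    rw [← mul_assoc, ← mul_assoc, hmm, hm, neg_mul, neg_mul, mul_assoc, mul_assoc, ih']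

lemma wedge_perm (n : ℕ) (τ : Equiv.Perm (Fin (n+1))) (x : Fin (n+1) → V) :
    ExteriorAlgebra.ιMulti ℚ n (fun i => x (τ i.succ) - x (τ 0)) =
      ((Equiv.Perm.sign τ : ℤ) : ℚ) •
        ExteriorAlgebra.ιMulti ℚ n (fun i => x i.succ - x 0) := by
  have hτ : τ ∈ Submonoid.closure (Set.range fun i : Fin n ↦ Equiv.swap i.castSucc i.succ) := by
    rw [Equiv.Perm.mclosure_swap_castSucc_succ]; trivial
  induction hτ using Submonoid.closure_induction generalizing x with
  | one => simp
  | mul σ τ _ _ h1 h2 =>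
    have := h2 (fun i => x (σ i))
    simp only [Equiv.Perm.mul_apply]
    rw [this, h1, smul_smul]
    simp [mul_comm]
  | mem τ h =>
    obtain ⟨i, rfl⟩ := h
    have hs : Equiv.Perm.sign (Equiv.swap i.castSucc i.succ) = -1 :=
      Equiv.Perm.sign_swap (by simp [Fin.ext_iff])
    dsimp only
    rw [hs]
    simp only [Units.val_neg, Units.val_one, Int.cast_neg, Int.cast_one, neg_smul, one_smul]
    cases n with
    | zero => exact i.elim0
    | succ n =>
    induction i using Fin.cases with
    | zero =>
      rw [ExteriorAlgebra.ιMulti_succ_apply, ExteriorAlgebra.ιMulti_succ_apply]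
      have e0 : ∀ j : Fin n, Equiv.swap (0 : Fin (n+2)) (Fin.succ 0) j.succ.succ = j.succ.succ :=
        fun j => Equiv.swap_apply_of_ne_of_ne (Fin.succ_ne_zero _) (by simp [Fin.ext_iff])
      have e1 : Matrix.vecTail (fun j : Fin (n+1) =>
          x (Equiv.swap (0 : Fin (n+2)) (Fin.succ 0) j.succ) -
          x (Equiv.swap (0 : Fin (n+2)) (Fin.succ 0) 0)) =
          fun j : Fin n => Matrix.vecTail (fun j : Fin (n+1) => x j.succ - x 0) j
            - (x (Fin.succ 0) - x 0) := by
        funext j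
        simp only [Matrix.vecTail, Function.comp, Equiv.swap_apply_left, e0]
        abel
      rw [Fin.castSucc_zero, e1, Equiv.swap_apply_left, Equiv.swap_apply_right,
        ← neg_sub (x (Fin.succ 0)) (x 0), map_neg, neg_mul, wedge_sub]
    | succ i =>
      have := (ExteriorAlgebra.ιMulti ℚ (n+1)).map_swap (fun j => x j.succ - x (0 : Fin (n+2)))
        (i := i.castSucc) (j := i.succ) (by simp [Fin.ext_iff])
      rw [← this]
      congr 1
      funext j
      have h0 : Equiv.swap i.succ.castSucc i.succ.succ (0 : Fin (n+2)) = 0 :=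
        Equiv.swap_apply_of_ne_of_ne (by simp [Fin.ext_iff]) (by simp [Fin.ext_iff])
      have h1 : Equiv.swap i.succ.castSucc i.succ.succ j.succ
          = (Equiv.swap i.castSucc i.succ j).succ := by
        rw [← Fin.succ_castSucc]
        exact ((Fin.succ_injective _).swap_apply _ _ _)
      simp only [Function.comp, h0, h1]

lemma coe_map (k : ℕ) (f : V →ₗ[ℚ] V) (v : ⋀[ℚ]^k V) :
    ((exteriorPower.map k f v : ⋀[ℚ]^k V) : ExteriorAlgebra ℚ V) =
      ExteriorAlgebra.map f (v : ExteriorAlgebra ℚ V) := by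
  have : (Submodule.subtype _) ∘ₗ exteriorPower.map k f =
      (ExteriorAlgebra.map f).toLinearMap ∘ₗ (Submodule.subtype (⋀[ℚ]^k V)) := by
    apply exteriorPower.linearMap_ext
    ext m
    simp [exteriorPower.map_apply_ιMulti, ExteriorAlgebra.map_apply_ιMulti]
  exact LinearMap.congr_fun this v

variable {I : Type*} [LinearOrder I] (b : Basis I ℚ V)

/-- Diagonal map in a basis. -/
noncomputable def dg (ε : I → ℚ) : V →ₗ[ℚ] V := b.constr ℚ (fun i => ε i • b i)

lemma dg_apply (ε : I → ℚ) (i : I) : dg b ε (b i) = ε i • b i := by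
  simp [dg]

lemma repr_dg (k : ℕ) (ε : I → ℚ) (v : ⋀[ℚ]^k V) (s : Set.powersetCard I k) :
    (b.exteriorPower k).repr (exteriorPower.map k (dg b ε) v) s =
      (∏ i ∈ s.1, ε i) * (b.exteriorPower k).repr v s := by
  have key : ∀ t : Set.powersetCard I k, exteriorPower.map k (dg b ε) (b.exteriorPower k t) =
      (∏ i ∈ t.1, ε i) • b.exteriorPower k t := by
    intro t
    rw [exteriorPower.basis_apply, exteriorPower.map_apply_ιMulti_family]
    unfold exteriorPower.ιMulti_family
    have : ((dg b ε : V → V) ∘ b) ∘ (Set.powersetCard.ofFinEmbEquiv.symm t) =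
      fun j => ε (Set.powersetCard.ofFinEmbEquiv.symm t j) •
        b (Set.powersetCard.ofFinEmbEquiv.symm t j) := by
      funext j; simp [dg_apply]
    rw [this, AlternatingMap.map_smul_univ]
    congr 1
    refine Finset.prod_bij (fun j _ => Set.powersetCard.ofFinEmbEquiv.symm t j) ?_ ?_ ?_ ?_
    · intro j _
      exact (Set.powersetCard.mem_range_ofFinEmbEquiv_symm_iff_mem t _).1 ⟨j, rfl⟩
    · intro j _ j' _ h
      exact (Set.powersetCard.ofFinEmbEquiv.symm t).injective h
    · intro i hi
      obtain ⟨j, hj⟩ := (Set.powersetCard.mem_range_ofFinEmbEquiv_symm_iff_mem t i).2 hi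
      exact ⟨j, Finset.mem_univ _, hj⟩
    · intros; rfl
  have : (b.exteriorPower k).coord s ∘ₗ exteriorPower.map k (dg b ε) =
      (∏ i ∈ s.1, ε i) • (b.exteriorPower k).coord s := by
    apply (b.exteriorPower k).ext
    intro t
    rw [LinearMap.comp_apply, key, map_smul, LinearMap.smul_apply]
    by_cases h : s = t
    · rw [h]
    · simp only [Basis.coord_apply, Basis.repr_self, Finsupp.single_eq_of_ne h, smul_zero]
  have h2 := LinearMap.congr_fun this v
  simpa using h2

end general

section concrete

lemma mem_eigen {V : Type*} [AddCommGroup V] [Module ℚ V] (f : V →ₗ[ℚ] V) (c : ℚ) (v : V) :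
    v ∈ eigen f c ↔ f v = c • v := by
  simp [eigen, LinearMap.mem_ker, sub_eq_zero]

lemma sum_pairs (f : ℕ → ℚ) (m : ℕ) :
    ∑ x : Fin (2*m), f x = ∑ j : Fin m, (f (2*j) + f (2*j+1)) := by
  rw [Fin.sum_univ_eq_sum_range f, Fin.sum_univ_eq_sum_range (fun j => f (2*j) + f (2*j+1))]
  induction m with
  | zero => simp
  | succ m ih =>
    rw [show 2*(m+1) = 2*m+1+1 by ring, Finset.sum_range_succ, Finset.sum_range_succ, ih,
      Finset.sum_range_succ]
    ring

variable (n : ℕ)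

/-- `a_i - a_0`. -/
noncomputable def hfun (i : ℕ) (x : ℕ) : ℚ := (if x/2 = i then 1 else 0) - (if x/2 = 0 then 1 else 0)

/-- `e_{2i} - e_{2i+1}`. -/
noncomputable def dfun (i : ℕ) (x : ℕ) : ℚ := if x/2 = i then (if x % 2 = 0 then 1 else -1) else 0

/-- `a_i - a_0` as an element of `U`. -/
noncomputable def hU (i : Fin (n+1)) : U (2*(n+1)) := ⟨fun x => hfun i x, by
  rw [mem_U, sum_pairs (hfun i)]
  have h1 : ∀ j : ℕ, (2*j)/2 = j := by intro j; omega
  have h2 : ∀ j : ℕ, (2*j+1)/2 = j := by intro j; omega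
  simp only [hfun, h1, h2]
  have h3 : ∀ j : Fin (n+1), ((j : ℕ) = 0 ↔ j = 0) := by intro j; rw [Fin.ext_iff]; rfl
  simp [Finset.sum_add_distrib, ← Fin.ext_iff, h3]⟩

/-- `e_{2i} - e_{2i+1}` as an element of `U`. -/
noncomputable def dU (i : Fin (n+1)) : U (2*(n+1)) := ⟨fun x => dfun i x, by
  rw [mem_U, sum_pairs (dfun i)]
  have h1 : ∀ j : ℕ, (2*j)/2 = j := by intro j; omega
  have h2 : ∀ j : ℕ, (2*j+1)/2 = j := by intro j; omega
  have h3 : ∀ j : ℕ, (2*j+1)%2 = 1 := by intro j; omega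
  apply Finset.sum_eq_zero
  intro j _
  simp only [dfun, h1, h2, h3]
  split_ifs <;> simp_all⟩

/-- the basis vectors -/
noncomputable def bv : Fin (n+1) ⊕ Fin n → U (2*(n+1)) := Sum.elim (dU n) (fun i => hU n i.succ)

/-- coordinate functional -/
noncomputable def ev (j : ℕ) (hj : j < 2*(n+1)) : U (2*(n+1)) →ₗ[ℚ] ℚ :=
  (LinearMap.proj (⟨j, hj⟩ : Fin (2*(n+1)))) ∘ₗ (U (2*(n+1))).subtype

/-- dual functionals -/
noncomputable def du : Fin (n+1) ⊕ Fin n → Module.Dual ℚ (U (2*(n+1))) :=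
  Sum.elim
    (fun i => (1/2 : ℚ) • (ev n (2*i) (by omega) - ev n (2*i+1) (by omega)))
    (fun i => (1/2 : ℚ) • (ev n (2*i+2) (by omega) + ev n (2*i+3) (by omega)))

lemma du_bv (i j : Fin (n+1) ⊕ Fin n) : du n i (bv n j) = if i = j then 1 else 0 := by
  have h1 : ∀ j : ℕ, (2*j)/2 = j := by intro j; omega
  have h2 : ∀ j : ℕ, (2*j+1)/2 = j := by intro j; omega
  have h3 : ∀ j : ℕ, (2*j+1)%2 = 1 := by intro j; omega
  have h4 : ∀ j : ℕ, (2*j+2)/2 = j+1 := by intro j; omega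
  have h5 : ∀ j : ℕ, (2*j+3)/2 = j+1 := by intro j; omega
  have h6 : ∀ j : ℕ, (2*j+3)%2 = 1 := by intro j; omega
  rcases i with i | i <;> rcases j with j | j <;>
    simp only [du, bv, ev, dU, hU, dfun, hfun, Sum.elim_inl, Sum.elim_inr, LinearMap.smul_apply,
      LinearMap.sub_apply, LinearMap.add_apply, LinearMap.comp_apply, LinearMap.proj_apply,
      Submodule.subtype_apply, h1, h2, h3, h4, h5, h6, Sum.inl.injEq, Sum.inr.injEq,
      Fin.ext_iff, Fin.val_succ, reduceCtorEq, if_false] <;>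
    split_ifs <;> simp_all <;> norm_num

lemma li_bv : LinearIndependent ℚ (bv n) :=
  LinearIndependent.of_pairwise_dual_eq_zero_one _ (du n)
    (fun i j h => by dsimp only; rw [du_bv, if_neg h]) (fun i => by rw [du_bv, if_pos rfl])

lemma finrank_U : finrank ℚ (U (2*(n+1))) = 2*n+1 := by
  have h := LinearMap.finrank_range_add_finrank_ker (sumMap (2*(n+1)))
  have h2 : LinearMap.range (sumMap (2*(n+1))) = ⊤ := by
    rw [LinearMap.range_eq_top]
    intro c
    refine ⟨Pi.single ⟨0, by omega⟩ c, ?_⟩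
    simp [sumMap]
  rw [h2, finrank_top, finrank_self, finrank_fin_fun] at h
  change 1 + finrank ℚ (U (2*(n+1))) = _ at h
  omega

/-- the basis -/
noncomputable def bs0 : Basis (Fin (n+1) ⊕ Fin n) ℚ (U (2*(n+1))) :=
  haveI : Nonempty (Fin (n+1) ⊕ Fin n) := ⟨Sum.inl 0⟩
  basisOfLinearIndependentOfCardEqFinrank (li_bv n) (by
    rw [finrank_U]; simp; omega)

/-- the basis, lex ordered -/
noncomputable def bs : Basis (Fin (n+1) ⊕ₗ Fin n) ℚ (U (2*(n+1))) := (bs0 n).reindex toLex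

lemma bs_inl (i : Fin (n+1)) : bs n (toLex (Sum.inl i)) = dU n i := by
  simp [bs, bs0, bv]

lemma bs_inr (i : Fin n) : bs n (toLex (Sum.inr i)) = hU n i.succ := by
  simp [bs, bs0, bv]

lemma hU_zero : hU n 0 = 0 := by
  ext x; simp [hU, hfun]

variable {n}

lemma permU_coe (g : Equiv.Perm (Fin (2*(n+1)))) (u : U (2*(n+1))) (x : Fin (2*(n+1))) :
    (permU (2*(n+1)) g u : Fin (2*(n+1)) → ℚ) (g x) = (u : Fin (2*(n+1)) → ℚ) x := by
  simp [permU, permMap, LinearMap.funLeft_apply]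

lemma permU_ext (g : Equiv.Perm (Fin (2*(n+1)))) (u w : U (2*(n+1)))
    (h : ∀ x, (u : Fin (2*(n+1)) → ℚ) x = (w : Fin (2*(n+1)) → ℚ) (g x)) :
    permU (2*(n+1)) g u = w := by
  apply Subtype.ext
  funext y
  obtain ⟨x, rfl⟩ := g.surjective y
  rw [permU_coe, h]

lemma permU_hU {g : Equiv.Perm (Fin (2*(n+1)))} {τ : Equiv.Perm (Fin (n+1))}
    (h : IsHypAt 0 g τ) (i : Fin (n+1)) :
    permU (2*(n+1)) g (hU n i) = hU n (τ i) - hU n (τ 0) := by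
  apply permU_ext
  intro x
  have hx := h.2 x (Nat.zero_le _) (by omega)
  simp only [Nat.sub_zero] at hx
  have hlt : (x : ℕ)/2 < n+1 := by omega
  have key : ∀ i : Fin (n+1), ((x : ℕ)/2 = i ↔ ((g x : Fin (2*(n+1))) : ℕ)/2 = (τ i : ℕ)) := by
    intro i
    rw [hx, ← Fin.ext_iff, τ.injective.eq_iff, Fin.ext_iff]
  have k0 := key 0
  simp only [Fin.val_zero] at k0
  simp only [hU, Submodule.coe_sub, Pi.sub_apply, hfun]
  simp only [key i, k0]
  ring

/-- permutation of letters from a permutation of pairs -/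
noncomputable def tPerm (τ : Equiv.Perm (Fin (n+1))) : Equiv.Perm (Fin (2*(n+1))) where
  toFun x := ⟨2 * (τ ⟨(x : ℕ)/2, by omega⟩ : ℕ) + (x : ℕ) % 2, by omega⟩
  invFun x := ⟨2 * (τ.symm ⟨(x : ℕ)/2, by omega⟩ : ℕ) + (x : ℕ) % 2, by omega⟩
  left_inv x := by
    have : ∀ a b : ℕ, (2 * a + b % 2) / 2 = a := by intros; omega
    ext; simp only [this, Fin.eta, Equiv.symm_apply_apply]; omega
  right_inv x := by
    have : ∀ a b : ℕ, (2 * a + b % 2) / 2 = a := by intros; omega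
    ext; simp only [this, Fin.eta, Equiv.apply_symm_apply]; omega

lemma tPerm_hyp (τ : Equiv.Perm (Fin (n+1))) : IsHypAt 0 (tPerm τ) τ := by
  refine ⟨fun i h => by omega, fun i _ _ => ?_⟩
  simp only [tPerm, Equiv.coe_fn_mk, Nat.sub_zero]
  omega

/-- swap inside the pair `j` -/
noncomputable def sPerm (j : Fin (n+1)) : Equiv.Perm (Fin (2*(n+1))) :=
  Function.Involutive.toPerm
    (fun x => ⟨if (x : ℕ)/2 = j then 2 * ((x : ℕ)/2) + (1 - (x : ℕ) % 2) else x, by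
      split_ifs <;> omega⟩)
    (by intro x; ext; dsimp only; split_ifs <;> omega)

lemma sPerm_coe (j : Fin (n+1)) (x : Fin (2*(n+1))) : (sPerm j x : ℕ) =
    if (x : ℕ)/2 = j then 2 * ((x : ℕ)/2) + (1 - (x : ℕ) % 2) else x := rfl

lemma sPerm_hyp (j : Fin (n+1)) : IsHypAt 0 (sPerm j) (1 : Equiv.Perm (Fin (n+1))) := by
  refine ⟨fun i h => by omega, fun i _ _ => ?_⟩
  simp only [sPerm_coe, Nat.sub_zero, Equiv.Perm.coe_one, id]
  split_ifs <;> omega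

lemma permU_s_d (j i : Fin (n+1)) :
    permU (2*(n+1)) (sPerm j) (dU n i) = (if i = j then (-1 : ℚ) else 1) • dU n i := by
  apply permU_ext
  intro x
  simp only [dU, Submodule.coe_smul, Pi.smul_apply, dfun, sPerm_coe, smul_eq_mul, Fin.ext_iff]
  split_ifs <;> first | omega | norm_num

lemma permU_s (j : Fin (n+1)) :
    permU (2*(n+1)) (sPerm j) = dg (bs n)
      (fun x => if x = toLex (Sum.inl j) then -1 else 1) := by
  apply (bs n).ext
  intro x
  rw [dg_apply]
  induction x using Lex.rec with
  | _ x =>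
  rcases x with i | i
  · rw [bs_inl, permU_s_d]; simp only [toLex_inj, Sum.inl.injEq]
  · rw [bs_inr, permU_hU (sPerm_hyp j)]; simp [hU_zero]


/-- coefficients of the projection onto the span of the `hU` -/
noncomputable def epsP (x : Fin (n+1) ⊕ₗ Fin n) : ℚ := Sum.elim (fun _ => 0) (fun _ => 1) (ofLex x)

/-- coefficients of the projection killing also `hU i.succ` -/
noncomputable def epsR (i : Fin n) (x : Fin (n+1) ⊕ₗ Fin n) : ℚ :=
  Sum.elim (fun _ => 0) (fun j => if j = i then 0 else 1) (ofLex x)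

lemma RtP (i : Fin n) :
    dg (bs n) (epsR i) ∘ₗ permU (2*(n+1)) (tPerm (Equiv.swap 0 i.succ)) ∘ₗ dg (bs n) epsP =
      dg (bs n) (epsR i) := by
  apply (bs n).ext
  intro x
  rw [LinearMap.comp_apply, LinearMap.comp_apply, dg_apply, dg_apply]
  induction x using Lex.rec with
  | _ x =>
  rcases x with j | j
  · simp [epsP, epsR]
  · simp only [epsP, epsR, ofLex_toLex, Sum.elim_inr, one_smul]
    rw [bs_inr, permU_hU (tPerm_hyp _), Equiv.swap_apply_left, map_sub, ← bs_inr n i, dg_apply]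
    by_cases hj : j = i
    · subst hj
      simp [epsR, hU_zero]
    · rw [Equiv.swap_apply_of_ne_of_ne (Fin.succ_ne_zero _)
        (fun h => hj (Fin.succ_injective _ h)), ← bs_inr, dg_apply]
      simp [epsR, hj]

/-- the full set of `hU` indices -/
noncomputable def Fset (n : ℕ) : Finset (Fin (n+1) ⊕ₗ Fin n) :=
  Finset.univ.map ⟨fun j => toLex (Sum.inr j), fun a b h => by simpa using h⟩

lemma mem_Fset (x : Fin (n+1) ⊕ₗ Fin n) : x ∈ Fset n ↔ ∃ j, toLex (Sum.inr j) = x := by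
  simp only [Fset, Finset.mem_map, Finset.mem_univ, true_and]; rfl

lemma card_Fset : (Fset n).card = n := by simp [Fset]

lemma coeff_zero {k : ℕ} (v : ⋀[ℚ]^k (U (2*(n+1))))
    (hv : ∀ (g : Equiv.Perm (Fin (2*(n+1)))) (τ : Equiv.Perm (Fin (n+1))), IsHypAt 0 g τ →
      exteriorPower.map k (permU (2*(n+1)) g) v = ((Equiv.Perm.sign τ : ℤ) : ℚ) • v)
    (s : Set.powersetCard (Fin (n+1) ⊕ₗ Fin n) k) (hs : s.1 ≠ Fset n) :
    ((bs n).exteriorPower k).repr v s = 0 := by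
  have step1 : ∀ (s : Set.powersetCard (Fin (n+1) ⊕ₗ Fin n) k) (j : Fin (n+1)),
      toLex (Sum.inl j) ∈ s.1 → ((bs n).exteriorPower k).repr v s = 0 := by
    intro s j hj
    have h := repr_dg (bs n) k (fun x => if x = toLex (Sum.inl j) then -1 else 1) v s
    rw [← permU_s, hv _ _ (sPerm_hyp j), Finset.prod_ite_eq', if_pos hj] at h
    simp at h
    linarith
  have step2 : exteriorPower.map k (dg (bs n) epsP) v = v := by
    apply ((bs n).exteriorPower k).ext_elem
    intro s
    rw [repr_dg]
    by_cases h : ∃ j : Fin (n+1), toLex (Sum.inl j) ∈ s.1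
    · obtain ⟨j, hj⟩ := h
      rw [step1 s j hj, mul_zero]
    · rw [Finset.prod_eq_one, one_mul]
      intro x hx
      induction x using Lex.rec with
      | _ x =>
      rcases x with j | j
      · exact absurd ⟨j, hx⟩ h
      · rfl
  by_cases h : ∃ j : Fin (n+1), toLex (Sum.inl j) ∈ s.1
  · obtain ⟨j, hj⟩ := h
    exact step1 s j hj
  have hsub : s.1 ⊆ Fset n := by
    intro x hx
    rw [mem_Fset]
    induction x using Lex.rec with
    | _ x =>
    rcases x with j | j
    · exact absurd ⟨j, hx⟩ h
    · exact ⟨j, rfl⟩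
  have : ∃ i : Fin n, toLex (Sum.inr i) ∉ s.1 := by
    by_contra hc
    push Not at hc
    apply hs
    apply Finset.Subset.antisymm hsub
    intro x hx
    obtain ⟨j, rfl⟩ := (mem_Fset x).1 hx
    exact hc j
  obtain ⟨i, hi⟩ := this
  have hsg : Equiv.Perm.sign (Equiv.swap (0 : Fin (n+1)) i.succ) = -1 :=
    Equiv.Perm.sign_swap (Fin.succ_ne_zero _).symm
  have hR : exteriorPower.map k (dg (bs n) (epsR i)) v =
      - exteriorPower.map k (dg (bs n) (epsR i)) v := by
    conv_lhs => rw [← RtP, exteriorPower.map_comp, exteriorPower.map_comp, LinearMap.comp_apply,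
      LinearMap.comp_apply, step2, hv _ _ (tPerm_hyp _), hsg, map_smul]
    simp only [Units.val_neg, Units.val_one, Int.cast_neg, Int.cast_one]
    exact neg_one_smul ℚ (exteriorPower.map k (dg (bs n) (epsR i)) v)
  have h3 := congrArg (fun z => ((bs n).exteriorPower k).repr z s) hR
  simp only [map_neg, Finsupp.neg_apply] at h3
  have h2 := repr_dg (bs n) k (epsR i) v s
  rw [Finset.prod_eq_one, one_mul] at h2
  · rw [h2] at h3; linarith
  · intro x hx
    obtain ⟨j, rfl⟩ := (mem_Fset x).1 (hsub hx)
    have : j ≠ i := by rintro rfl; exact hi hx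
    simp [epsR, this]

/-- the full subset as an element of `powersetCard` -/
noncomputable def Fs (n : ℕ) : Set.powersetCard (Fin (n+1) ⊕ₗ Fin n) n := ⟨Fset n, card_Fset⟩

lemma coe_bF : (((bs n).exteriorPower n (Fs n) : ⋀[ℚ]^n (U (2*(n+1)))) :
    ExteriorAlgebra ℚ (U (2*(n+1)))) =
      ExteriorAlgebra.ιMulti ℚ n (fun i => hU n i.succ - hU n 0) := by
  rw [exteriorPower.basis_apply, exteriorPower.ιMulti_family_apply_coe]
  unfold ExteriorAlgebra.ιMulti_family
  congr 1
  funext i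
  have : (fun j : Fin n => (toLex (Sum.inr j) : Fin (n+1) ⊕ₗ Fin n)) =
      (Fset n).orderEmbOfFin card_Fset :=
    Finset.orderEmbOfFin_unique card_Fset (fun x => (mem_Fset _).2 ⟨x, rfl⟩)
      (fun a b h => by simpa using h)
  have h2 := congrFun this i
  rw [hU_zero, sub_zero, Function.comp, ← bs_inr]
  exact congrArg _ h2.symm

lemma act_bF (g : Equiv.Perm (Fin (2*(n+1)))) (τ : Equiv.Perm (Fin (n+1)))
    (h : IsHypAt 0 g τ) :
    act (2*(n+1)) g ((bs n).exteriorPower n (Fs n) : ⋀[ℚ]^n (U (2*(n+1)))) =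
      ((Equiv.Perm.sign τ : ℤ) : ℚ) •
        (((bs n).exteriorPower n (Fs n) : ⋀[ℚ]^n (U (2*(n+1)))) :
    ExteriorAlgebra ℚ (U (2*(n+1)))) := by
  rw [coe_bF, ← wedge_perm]
  change ExteriorAlgebra.map _ _ = _
  rw [ExteriorAlgebra.map_apply_ιMulti]
  congr 1
  funext i
  simp only [Function.comp, hU_zero, sub_zero, permU_hU h]

lemma mem_space (k : ℕ) (v : ExteriorAlgebra ℚ (U (2*(n+1)))) :
    v ∈ ((⋀[ℚ]^k ↥(U (2*(n+1)))) ⊓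
        ⨅ (g : Equiv.Perm (Fin (2*(n+1)))) (τ : Equiv.Perm (Fin (n+1))) (_ : IsHypAt 0 g τ),
          eigen (act (2*(n+1)) g) ((Equiv.Perm.sign τ : ℤ) : ℚ)) ↔
    v ∈ ⋀[ℚ]^k ↥(U (2*(n+1))) ∧ ∀ (g : Equiv.Perm (Fin (2*(n+1)))) (τ : Equiv.Perm (Fin (n+1))),
      IsHypAt 0 g τ → act (2*(n+1)) g v = ((Equiv.Perm.sign τ : ℤ) : ℚ) • v := by
  simp only [Submodule.mem_inf, Submodule.mem_iInf, mem_eigen]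

lemma coeff_zero' {k : ℕ} (v : ⋀[ℚ]^k (U (2*(n+1))))
    (hv : ∀ (g : Equiv.Perm (Fin (2*(n+1)))) (τ : Equiv.Perm (Fin (n+1))), IsHypAt 0 g τ →
      act (2*(n+1)) g v = ((Equiv.Perm.sign τ : ℤ) : ℚ) • (v : ExteriorAlgebra ℚ (U (2*(n+1)))))
    (s : Set.powersetCard (Fin (n+1) ⊕ₗ Fin n) k) (hs : s.1 ≠ Fset n) :
    ((bs n).exteriorPower k).repr v s = 0 := by
  refine coeff_zero v (fun g τ h => Subtype.ext ?_) s hs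
  rw [coe_map, Submodule.coe_smul]
  exact hv g τ h

end concrete

end HypHook

/-- Let `q ≥ 1` and `0 ≤ k ≤ 2q−1`.  The subspace of `Λ^k U_{2q}` of vectors `v`
with `g·v = L_q(g)·v` for all `g` in the hyperoctahedral subgroup `H_q ≤ S_{2q}` on the pairs
`{2i−1, 2i}` has dimension `1` if `k = q−1` and `0` otherwise. -/
theorem stmt0 (q k : ℕ) (hq : 1 ≤ q) (hk : k ≤ 2*q - 1) :
    Module.finrank ℚ
      ↥((⋀[ℚ]^k ↥(U (2*q))) ⊓
        ⨅ (g : Equiv.Perm (Fin (2*q))) (τ : Equiv.Perm (Fin q)) (_ : IsHypAt 0 g τ),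
          eigen (act (2*q) g) ((Equiv.Perm.sign τ : ℤ) : ℚ)) =
      if k = q - 1 then 1 else 0 := by
  obtain ⟨n, rfl⟩ : ∃ n, q = n + 1 := ⟨q - 1, by omega⟩
  rw [Nat.add_sub_cancel]
  split_ifs with h
  · subst h
    rw [finrank_eq_one_iff']
    refine ⟨⟨((HypHook.bs k).exteriorPower k (HypHook.Fs k) : ⋀[ℚ]^k (U (2*(k+1)))),
      (HypHook.mem_space k _).2 ⟨Subtype.property _, HypHook.act_bF⟩⟩, ?_, ?_⟩
    · intro h0
      have h1 := congrArg Subtype.val h0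
      exact ((HypHook.bs k).exteriorPower k).ne_zero (HypHook.Fs k) (Subtype.ext h1)
    · rintro ⟨w, hw⟩
      obtain ⟨hw1, hw2⟩ := (HypHook.mem_space k w).1 hw
      refine ⟨((HypHook.bs k).exteriorPower k).repr ⟨w, hw1⟩ (HypHook.Fs k), Subtype.ext ?_⟩
      have : ((HypHook.bs k).exteriorPower k).repr ⟨w, hw1⟩ (HypHook.Fs k) •
          (HypHook.bs k).exteriorPower k (HypHook.Fs k) = ⟨w, hw1⟩ := by
        apply ((HypHook.bs k).exteriorPower k).ext_elem
        intro s
        by_cases hs : s = HypHook.Fs k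
        · subst hs
          rw [map_smul, Module.Basis.repr_self]
          simp
        · rw [HypHook.coeff_zero' ⟨w, hw1⟩ hw2 s (fun h => hs (Subtype.ext h)), map_smul,
            Module.Basis.repr_self]
          simp [Finsupp.single_eq_of_ne hs]
      have h3 := congrArg (Submodule.subtype (⋀[ℚ]^k (U (2*(k+1))))) this
      rw [map_smul] at h3
      exact h3
  · refine (congrArg (fun W : Submodule ℚ (ExteriorAlgebra ℚ (U (2*(n+1)))) =>
      Module.finrank ℚ W) (eq_bot_iff.2 ?_)).trans (finrank_bot _ _)
    intro w hw
    obtain ⟨hw1, hw2⟩ := (HypHook.mem_space k w).1 hw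
    have : (⟨w, hw1⟩ : ⋀[ℚ]^k (U (2*(n+1)))) = 0 := by
      apply ((HypHook.bs n).exteriorPower k).ext_elem
      intro s
      rw [HypHook.coeff_zero' ⟨w, hw1⟩ hw2 s]
      · simp
      · intro hs
        apply h
        have h2 : s.1.card = k := s.2
        rw [← h2, hs, HypHook.card_Fset]
    exact congrArg Subtype.val this
end

section
/- Let 2 ≤ r < n be integers and set N = n + r. Let H_{r−1} ≤ S_N be the hyperoctahedral subgroup on the pairs P_i = {2i−1, 2i} (i = 1,…,r−1), with character L_{r−1}. Then the subspace W = { v ∈ Λ^n U_N : g·v = L_{r−1}(g)·v for all g ∈ H_{r−1} } of Λ^n U_N is one-dimensional, and every permutation π ∈ S_N that fixes the letters 1,…,2r−2 pointwise acts on W by multiplication by sgn(π). (Equivalently: the restriction of the hook representation V_{r,1^n} of S_{n+r} to (S_2 ≀ S_{r−1}) × S_{n−r+2} contains a unique irreducible summand of the form L_{r−1} ⊠ V_β, namely L_{r−1} ⊠ V_{1^{n−r+2}}.) -/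
/-- The subspace `W = {v ∈ Λ^n U_{n+r} : g·v = L_{r−1}(g)·v for all g ∈ H_{r−1}}`, where
`H_{r−1} ≤ S_{n+r}` is the hyperoctahedral subgroup on the pairs `{2i−1, 2i}`, `i = 1,…,r−1`. -/
def Wsub (r n : ℕ) : Submodule ℚ (ExteriorAlgebra ℚ ↥(U (n+r))) :=
  (⋀[ℚ]^n ↥(U (n+r))) ⊓
    ⨅ (g : Equiv.Perm (Fin (n+r))) (τ : Equiv.Perm (Fin (r-1))) (_ : IsHypAt 0 g τ),
      eigen (act (n+r) g) ((Equiv.Perm.sign τ : ℤ) : ℚ)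

lemma act_map {V : Type*} [AddCommGroup V] [Module ℚ V] (n : ℕ) (f : V →ₗ[ℚ] V) (x : ⋀[ℚ]^n V) :
    ExteriorAlgebra.map f (x : ExteriorAlgebra ℚ V) = (exteriorPower.map n f x : ExteriorAlgebra ℚ V) := by
  have : (ExteriorAlgebra.map f).toLinearMap ∘ₗ (⋀[ℚ]^n V).subtype
      = (⋀[ℚ]^n V).subtype ∘ₗ exteriorPower.map n f := by
    apply exteriorPower.linearMap_ext
    ext v
    simp [ExteriorAlgebra.map_apply_ιMulti, exteriorPower.map_apply_ιMulti]
  exact LinearMap.congr_fun this x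

lemma dual_neg {V I : Type*} [AddCommGroup V] [Module ℚ V] [LinearOrder I] (n : ℕ)
    (b : Module.Basis I ℚ V) (s : Set.powersetCard I n) (j : I) (hj : j ∈ s) (f : V →ₗ[ℚ] V)
    (hf : ∀ i, f (b i) = if i = j then - b i else b i) (x : ⋀[ℚ]^n V) :
    exteriorPower.ιMultiDual ℚ n b s (exteriorPower.map n f x) =
      - exteriorPower.ιMultiDual ℚ n b s x := by
  have hc : ∀ k v, b.coord k (f v) = (if k = j then -1 else 1) * b.coord k v := by
    intro k v
    have : b.coord k ∘ₗ f = (if k = j then (-1:ℚ) else 1) • b.coord k := by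
      apply b.ext
      intro i
      simp only [LinearMap.comp_apply, hf, LinearMap.smul_apply]
      by_cases h1 : i = j <;> by_cases h2 : k = j <;> simp_all [Finsupp.single_apply]
    rw [← smul_eq_mul, ← LinearMap.smul_apply, ← this]; rfl
  obtain ⟨k, hk⟩ := (Set.powersetCard.mem_range_ofFinEmbEquiv_symm_iff_mem s j).mpr hj
  have : (exteriorPower.ιMultiDual ℚ n b s) ∘ₗ exteriorPower.map n f =
      - exteriorPower.ιMultiDual ℚ n b s := by
    apply exteriorPower.linearMap_ext
    ext v
    simp only [LinearMap.compAlternatingMap_apply, LinearMap.comp_apply,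
      exteriorPower.map_apply_ιMulti, exteriorPower.ιMultiDual_apply_ιMulti, Function.comp_apply, hc,
      LinearMap.neg_apply]
    have := Matrix.det_mul_row (fun l => if (Set.powersetCard.ofFinEmbEquiv.symm s) l = j then (-1:ℚ) else 1)
      (Matrix.of fun i l => b.coord (Set.powersetCard.ofFinEmbEquiv.symm s l) (v i))
    simp only [Matrix.of_apply] at this
    rw [this, Finset.prod_eq_single k]
    · simp [hk]
    · intro l _ hl
      rw [if_neg]
      rw [← hk]
      exact fun h => hl ((Set.powersetCard.ofFinEmbEquiv.symm s).injective h)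
    · simp
  exact LinearMap.congr_fun this x

lemma mem_span_of_fixed {V I : Type*} [AddCommGroup V] [Module ℚ V] [LinearOrder I] (n : ℕ)
    (b : Module.Basis I ℚ V) (T : Set.powersetCard I n) (f : I → V →ₗ[ℚ] V)
    (hf : ∀ j, j ∉ T → ∀ i, f j (b i) = if i = j then - b i else b i) (x : ⋀[ℚ]^n V)
    (hx : ∀ j, j ∉ T → exteriorPower.map n (f j) x = x) :
    x = (exteriorPower.ιMultiDual ℚ n b T x) • exteriorPower.ιMulti_family ℚ n b T := by
  apply (b.exteriorPower n).repr.injective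
  ext s
  rw [exteriorPower.basis_repr_apply, map_smul, exteriorPower.basis_repr]
  by_cases h : s = T
  · simp [h]
  · obtain ⟨j, h1, h2⟩ := (Set.powersetCard.exists_mem_notMem_iff_ne s T).mp h
    have := dual_neg n b s j h1 (f j) (hf j h2) x
    rw [hx j h2] at this
    have h0 : exteriorPower.ιMultiDual ℚ n b s x = 0 := by linarith
    simp [h0, Ne.symm h]

lemma alt_det {V X : Type*} [AddCommGroup V] [Module ℚ V] [AddCommGroup X] [Module ℚ X] {n : ℕ}
    (b : Module.Basis (Fin n) ℚ V) (F : V [⋀^Fin n]→ₗ[ℚ] X) (f : V →ₗ[ℚ] V) (c : Fin n → V) :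
    F (f ∘ c) = LinearMap.det f • F c := by
  rw [← sub_eq_zero, ← Module.forall_dual_apply_eq_zero_iff ℚ]
  intro φ
  have h := (φ.compAlternatingMap F).eq_smul_basis_det b
  have h1 := congrArg (fun G => G (f ∘ c)) h
  have h2 := congrArg (fun G => G c) h
  simp only [LinearMap.compAlternatingMap_apply, AlternatingMap.smul_apply, smul_eq_mul,
    Module.Basis.det_comp] at h1 h2
  rw [map_sub, map_smul, h1, h2, smul_eq_mul]; ring

lemma det_funLeft {K : Type*} [Fintype K] [DecidableEq K] (ρ : Equiv.Perm K) :
    LinearMap.det (LinearMap.funLeft ℚ ℚ ρ) = ((Equiv.Perm.sign ρ : ℤ) : ℚ) := by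
  rw [← LinearMap.det_toMatrix']
  have : LinearMap.toMatrix' (LinearMap.funLeft ℚ ℚ ρ) = (1 : Matrix K K ℚ).submatrix ρ id := by
    ext i j
    simp [LinearMap.toMatrix'_apply, LinearMap.funLeft_apply, Matrix.one_apply, Pi.single_apply]
  rw [this, Matrix.det_permute]; simp

abbrev KK (N q : ℕ) := Fin q ⊕ {i : Fin N // 2 * q ≤ (i : ℕ)}

def pp (N q : ℕ) (i : Fin N) : KK N q :=
  if h : (i : ℕ) < 2 * q then Sum.inl ⟨(i : ℕ) / 2, by omega⟩ else Sum.inr ⟨i, by omega⟩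

lemma pp_surj (N q : ℕ) (hq : 2 * q ≤ N) : Function.Surjective (pp N q) := by
  rintro (j | j)
  · refine ⟨⟨2 * j, by omega⟩, ?_⟩
    have : 2 * (j : ℕ) < 2 * q := by omega
    simp [pp]
  · refine ⟨j.1, ?_⟩
    have := j.2
    simp only [pp]
    rw [dif_neg (by omega)]

lemma pp_even (N q : ℕ) (hq : 2 * q ≤ N) (j : Fin q) :
    pp N q ⟨2 * j, by omega⟩ = Sum.inl j := by
  simp [pp]

lemma pp_odd (N q : ℕ) (hq : 2 * q ≤ N) (j : Fin q) :
    pp N q ⟨2 * j + 1, by omega⟩ = Sum.inl j := by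
  simp only [pp]
  rw [dif_pos (by omega)]
  congr 1; ext; simp only []; omega

/-- weighted sum on orbit functions -/
noncomputable def wsum (N q : ℕ) : (KK N q → ℚ) →ₗ[ℚ] ℚ :=
  sumMap N ∘ₗ LinearMap.funLeft ℚ ℚ (pp N q)

lemma wsum_apply (N q : ℕ) (y : KK N q → ℚ) : wsum N q y = ∑ i, y (pp N q i) := by
  simp [wsum, sumMap, LinearMap.funLeft_apply]

noncomputable def EE (N q : ℕ) : LinearMap.ker (wsum N q) →ₗ[ℚ] U N :=
  (LinearMap.funLeft ℚ ℚ (pp N q)).restrict (fun _ hx => hx)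

lemma EE_apply (N q : ℕ) (y : LinearMap.ker (wsum N q)) (i : Fin N) :
    (EE N q y : Fin N → ℚ) i = (y : KK N q → ℚ) (pp N q i) := rfl

noncomputable def dd (N q : ℕ) (hq : 2 * q ≤ N) (j : Fin q) : U N :=
  ⟨Pi.single ⟨2 * j, by omega⟩ 1 - Pi.single ⟨2 * j + 1, by omega⟩ 1, by
    rw [mem_U]; simp [Finset.sum_sub_distrib]⟩

lemma sum_pos (N q n : ℕ) (hN : N = n + q + 1) : wsum N q (fun _ => 1) ≠ 0 := by
  rw [wsum_apply]; simp; omega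

lemma card_KK (N q n : ℕ) (hN : N = n + q + 1) (hq : 2 * q ≤ N) :
    Fintype.card (KK N q) = n + 1 := by
  have h2 : Fintype.card {i : Fin N // 2 * q ≤ (i : ℕ)} = N - 2 * q := by
    rw [← Fintype.card_fin (N - 2 * q)]
    refine Fintype.card_congr
      { toFun := fun i => ⟨i.1 - 2 * q, by have := i.2; have := i.1.2; omega⟩
        invFun := fun i => ⟨⟨i + 2 * q, by omega⟩, by simp⟩
        left_inv := ?_
        right_inv := ?_ }
    · rintro ⟨i, hi⟩; ext; simp only []; omega
    · rintro i; ext; simp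
  rw [Fintype.card_sum, h2, Fintype.card_fin]; omega

lemma finrank_ker (N q n : ℕ) (hN : N = n + q + 1) (hq : 2 * q ≤ N) :
    Module.finrank ℚ (LinearMap.ker (wsum N q)) = n := by
  have h := Module.Dual.finrank_ker_add_one_of_ne_zero (f := wsum N q)
    (fun h => sum_pos N q n hN (by rw [h]; rfl))
  rw [Module.finrank_fintype_fun_eq_card, card_KK N q n hN hq] at h
  omega

lemma finrank_U (N m : ℕ) (hN : N = m + 1) : Module.finrank ℚ (U N) = m := by
  have h := Module.Dual.finrank_ker_add_one_of_ne_zero (f := sumMap N)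
    (fun h => by
      have := LinearMap.congr_fun h (fun _ => 1)
      simp [sumMap] at this; omega)
  rw [Module.finrank_fintype_fun_eq_card, Fintype.card_fin] at h
  change Module.finrank ℚ (LinearMap.ker (sumMap N)) = m
  omega

lemma exists_basis (N q n : ℕ) (hN : N = n + q + 1) (hq : 2 * q ≤ N) :
    ∃ (c : Fin n → LinearMap.ker (wsum N q)) (b : Module.Basis (Fin q ⊕ Fin n) ℚ (U N)),
      (∀ j, b (Sum.inl j) = dd N q hq j) ∧ ∀ k, b (Sum.inr k) = EE N q (c k) := by
  let c := Module.finBasisOfFinrankEq ℚ (LinearMap.ker (wsum N q)) (finrank_ker N q n hN hq)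
  let Φ : ((Fin q → ℚ) × LinearMap.ker (wsum N q)) →ₗ[ℚ] U N :=
    (Fintype.linearCombination ℚ (dd N q hq)).coprod (EE N q)
  have hΦ : Function.Injective Φ := by
    rw [injective_iff_map_eq_zero]
    rintro ⟨a, y⟩ h
    have h' : ∀ i : Fin N, ∑ j, a j * (dd N q hq j : Fin N → ℚ) i
        + (y : KK N q → ℚ) (pp N q i) = 0 := by
      intro i
      have := congrFun (congrArg Subtype.val h) i
      simpa [Φ, Fintype.linearCombination_apply, EE_apply] using this
    have he : ∀ j, a j + (y : KK N q → ℚ) (Sum.inl j) = 0 := by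
      intro j
      have := h' ⟨2 * j, by omega⟩
      rw [pp_even N q hq, Finset.sum_eq_single j] at this
      · simpa [dd, Pi.single_apply] using this
      · intro k _ hk
        have h1 : ¬ (j : ℕ) = k := fun h => hk (Fin.ext h.symm)
        have h2 : ¬ (2 * (j : ℕ)) = 2 * k + 1 := by omega
        simp [dd, Pi.single_apply, h1, h2]
      · simp
    have ho : ∀ j, - a j + (y : KK N q → ℚ) (Sum.inl j) = 0 := by
      intro j
      have := h' ⟨2 * j + 1, by omega⟩
      rw [pp_odd N q hq, Finset.sum_eq_single j] at this
      · simpa [dd, Pi.single_apply] using this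
      · intro k _ hk
        have h1 : ¬ (j : ℕ) = k := fun h => hk (Fin.ext h.symm)
        have h2 : ¬ (2 * (j : ℕ) + 1) = 2 * k := by omega
        simp [dd, Pi.single_apply, h1, h2]
      · simp
    have ha : a = 0 := by
      ext j
      have h1 := he j
      have h2 := ho j
      simp only [Pi.zero_apply]; linarith
    have hy : y = 0 := by
      ext x
      obtain ⟨i, rfl⟩ := pp_surj N q hq x
      simpa [ha] using h' i
    rw [ha, hy]; rfl
  let e := LinearEquiv.ofInjectiveOfFinrankEq Φ hΦ (by
    rw [Module.finrank_prod, finrank_ker N q n hN hq, finrank_U N (n + q) hN,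
      Module.finrank_fintype_fun_eq_card, Fintype.card_fin, add_comm])
  have hee : ∀ x, e x = Φ x := fun x => rfl
  refine ⟨c, ((Pi.basisFun ℚ (Fin q)).prod c).map e, ?_, ?_⟩
  · intro j
    simp [hee, Φ, Fintype.linearCombination_apply, Pi.single_apply]
  · intro k
    simp [hee, Φ]

/-- action on orbit functions -/
lemma rho_mem (N q : ℕ) (π : Equiv.Perm (Fin N)) (ρ : Equiv.Perm (KK N q))
    (h : ∀ i, pp N q (π i) = ρ (pp N q i)) (y : KK N q → ℚ) :
    wsum N q (LinearMap.funLeft ℚ ℚ ⇑ρ⁻¹ y) = wsum N q y := by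
  rw [wsum_apply, wsum_apply, ← Equiv.sum_comp π]
  simp [LinearMap.funLeft_apply, h]

lemma rho_le (N q : ℕ) (π : Equiv.Perm (Fin N)) (ρ : Equiv.Perm (KK N q))
    (h : ∀ i, pp N q (π i) = ρ (pp N q i)) :
    LinearMap.ker (wsum N q) ≤ (LinearMap.ker (wsum N q)).comap (LinearMap.funLeft ℚ ℚ ⇑ρ⁻¹) := by
  intro y hy
  rw [Submodule.mem_comap, LinearMap.mem_ker, rho_mem N q π ρ h]
  exact hy

lemma det_rho (N q : ℕ) (π : Equiv.Perm (Fin N)) (ρ : Equiv.Perm (KK N q))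
    (h : ∀ i, pp N q (π i) = ρ (pp N q i)) :
    LinearMap.det ((LinearMap.funLeft ℚ ℚ ⇑ρ⁻¹).restrict (rho_le N q π ρ h)) =
      ((Equiv.Perm.sign ρ : ℤ) : ℚ) := by
  have h1 := LinearMap.det_eq_det_mul_det (LinearMap.ker (wsum N q)) (LinearMap.funLeft ℚ ℚ ⇑ρ⁻¹)
    (rho_le N q π ρ h)
  have h2 : (LinearMap.ker (wsum N q)).mapQ (LinearMap.ker (wsum N q))
      (LinearMap.funLeft ℚ ℚ ⇑ρ⁻¹) (rho_le N q π ρ h) = LinearMap.id := by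
    apply Submodule.linearMap_qext
    refine LinearMap.ext fun y => ?_
    change (Submodule.Quotient.mk (LinearMap.funLeft ℚ ℚ ⇑ρ⁻¹ y) : _ ⧸ LinearMap.ker (wsum N q)) =
      Submodule.Quotient.mk y
    rw [Submodule.Quotient.eq, LinearMap.mem_ker, map_sub, rho_mem N q π ρ h, sub_self]
  rw [h2, LinearMap.det_id, mul_one, det_funLeft, Equiv.Perm.sign_inv] at h1
  exact h1.symm

lemma permU_EE (N q : ℕ) (π : Equiv.Perm (Fin N)) (ρ : Equiv.Perm (KK N q))
    (h : ∀ i, pp N q (π i) = ρ (pp N q i)) (y : LinearMap.ker (wsum N q)) :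
    permU N π (EE N q y) =
      EE N q ((LinearMap.funLeft ℚ ℚ ⇑ρ⁻¹).restrict (rho_le N q π ρ h) y) := by
  apply Subtype.ext
  funext i
  change (y : KK N q → ℚ) (pp N q (π⁻¹ i)) = (y : KK N q → ℚ) (ρ⁻¹ (pp N q i))
  have h1 : pp N q (π⁻¹ i) = ρ⁻¹ (pp N q i) := by
    rw [Equiv.Perm.eq_inv_iff_eq, ← h]; simp
  rw [h1]

lemma omega_eigen (N q n : ℕ) (hN : N = n + q + 1) (hq : 2 * q ≤ N)
    (π : Equiv.Perm (Fin N)) (ρ : Equiv.Perm (KK N q))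
    (h : ∀ i, pp N q (π i) = ρ (pp N q i)) (c : Fin n → LinearMap.ker (wsum N q)) :
    exteriorPower.map n (permU N π) (exteriorPower.ιMulti ℚ n (EE N q ∘ c)) =
      ((Equiv.Perm.sign ρ : ℤ) : ℚ) • exteriorPower.ιMulti ℚ n (EE N q ∘ c) := by
  have hb := Module.finBasisOfFinrankEq ℚ (LinearMap.ker (wsum N q)) (finrank_ker N q n hN hq)
  have := alt_det hb ((exteriorPower.ιMulti ℚ n).compLinearMap (EE N q))
    ((LinearMap.funLeft ℚ ℚ ⇑ρ⁻¹).restrict (rho_le N q π ρ h)) c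
  rw [det_rho N q π ρ h] at this
  rw [exteriorPower.map_apply_ιMulti]
  refine Eq.trans ?_ this
  rw [AlternatingMap.compLinearMap_apply]
  congr 1
  funext k
  exact permU_EE N q π ρ h (c k)

noncomputable def sw (N q : ℕ) (hq : 2 * q ≤ N) (j : Fin q) : Equiv.Perm (Fin N) :=
  Equiv.swap ⟨2 * j, by omega⟩ ⟨2 * j + 1, by omega⟩

lemma pp_sw (N q : ℕ) (hq : 2 * q ≤ N) (j : Fin q) (i : Fin N) :
    pp N q (sw N q hq j i) = pp N q i := by
  rw [sw, Equiv.swap_apply_def]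
  split_ifs with h1 h2
  · rw [h1, pp_even N q hq, pp_odd N q hq]
  · rw [h2, pp_even N q hq, pp_odd N q hq]
  · rfl

lemma sw_hyp (N q : ℕ) (hq : 2 * q ≤ N) (j : Fin q) :
    IsHypAt 0 (sw N q hq j) (1 : Equiv.Perm (Fin q)) := by
  constructor
  · intro i hi
    have hj := j.2
    apply Equiv.swap_apply_of_ne_of_ne <;> (intro h; rw [h] at hi; simp only [] at hi; omega)
  · intro i _ h2
    have h := pp_sw N q hq j i
    have h3 : ((sw N q hq j i : Fin N) : ℕ) < 2 * q := by
      by_contra h4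
      rw [pp, pp, dif_neg h4, dif_pos (by omega)] at h
      cases h
    rw [pp, pp, dif_pos h3, dif_pos (by omega)] at h
    have := congrArg Fin.val (Sum.inl.inj h)
    simpa using this

lemma sw_dd (N q : ℕ) (hq : 2 * q ≤ N) (j i : Fin q) :
    permU N (sw N q hq j) (dd N q hq i) = if i = j then - dd N q hq i else dd N q hq i := by
  apply Subtype.ext
  funext x
  change (dd N q hq i : Fin N → ℚ) ((sw N q hq j)⁻¹ x) = _
  have hinv : (sw N q hq j)⁻¹ x = sw N q hq j x := by rw [sw, Equiv.swap_inv]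
  rw [hinv, sw, Equiv.swap_apply_def]
  by_cases hij : i = j
  · subst hij
    rw [if_pos rfl]
    split_ifs with h1 h2
    · simp [dd, h1, Pi.single_apply]
    · simp [dd, h2, Pi.single_apply]
    · simp [dd, h1, h2, Pi.single_apply]
  · rw [if_neg hij]
    have h' : (i : ℕ) ≠ j := fun h => hij (Fin.ext h)
    have e1 : ¬ (j : ℕ) = i := fun h => h' h.symm
    have e2 : ¬ 2 * (j : ℕ) + 1 = 2 * i := by omega
    have e3 : ¬ 2 * (j : ℕ) = 2 * i + 1 := by omega
    split_ifs with h1 h2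
    · simp [dd, h1, Pi.single_apply, e1, e2, e3]
    · simp [dd, h2, Pi.single_apply, e1, e2, e3]
    · rfl

lemma hyp_rho (N q : ℕ) (g : Equiv.Perm (Fin N)) (τ : Equiv.Perm (Fin q))
    (h : IsHypAt 0 g τ) (i : Fin N) :
    pp N q (g i) = Equiv.Perm.sumCongr τ 1 (pp N q i) := by
  by_cases hi : (i : ℕ) < 2 * q
  · have h2 := h.2 i (Nat.zero_le _) (by omega)
    simp only [Nat.sub_zero] at h2
    have h3 := (τ ⟨(i : ℕ) / 2, by omega⟩).2
    have h4 : ((g i : Fin N) : ℕ) < 2 * q := by omega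
    rw [pp, pp, dif_pos hi, dif_pos h4]
    simp only [Equiv.Perm.sumCongr_apply, Sum.map_inl]
    congr 1
    exact Fin.ext h2
  · rw [h.1 i (Or.inr (by omega)), pp, dif_neg hi]
    rfl

lemma pi_mem (N q : ℕ) (π : Equiv.Perm (Fin N))
    (h : ∀ i : Fin N, (i : ℕ) < 2 * q → π i = i) (i : Fin N) :
    2 * q ≤ ((π i : Fin N) : ℕ) ↔ 2 * q ≤ (i : ℕ) := by
  constructor
  · intro h1
    by_contra h2
    rw [h i (by omega)] at h1
    exact h2 h1
  · intro h1
    by_contra h2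
    have := π.injective (h (π i) (by omega))
    rw [this] at h2
    exact h2 h1

lemma pi_rho (N q : ℕ) (π : Equiv.Perm (Fin N))
    (h : ∀ i : Fin N, (i : ℕ) < 2 * q → π i = i) (i : Fin N) :
    pp N q (π i) = Equiv.Perm.sumCongr 1 (π.subtypePerm (pi_mem N q π h)) (pp N q i) := by
  by_cases hi : (i : ℕ) < 2 * q
  · rw [h i hi, pp, dif_pos hi]; rfl
  · have := (pi_mem N q π h i).2 (by omega)
    rw [pp, pp, dif_neg hi, dif_neg (by omega)]; rfl

lemma W_mem (r n : ℕ) (v : ExteriorAlgebra ℚ ↥(U (n+r))) :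
    v ∈ Wsub r n ↔ v ∈ ⋀[ℚ]^n ↥(U (n+r)) ∧ ∀ (g : Equiv.Perm (Fin (n+r)))
      (τ : Equiv.Perm (Fin (r-1))), IsHypAt 0 g τ →
        act (n+r) g v = ((Equiv.Perm.sign τ : ℤ) : ℚ) • v := by
  simp only [Wsub, Submodule.mem_inf, Submodule.mem_iInf, eigen, LinearMap.mem_ker,
    LinearMap.sub_apply, LinearMap.smul_apply, LinearMap.id_apply, sub_eq_zero]

lemma main_aux (r n : ℕ) (hr : 2 ≤ r) (hrn : r < n) :
    ∃ c : Fin n → LinearMap.ker (wsum (n+r) (r-1)),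
      exteriorPower.ιMulti ℚ n (EE (n+r) (r-1) ∘ c) ≠ 0 ∧
      ∀ v ∈ Wsub r n, ∃ a : ℚ,
        v = a • (exteriorPower.ιMulti ℚ n (EE (n+r) (r-1) ∘ c) : ExteriorAlgebra ℚ ↥(U (n+r))) := by
  have hN : n + r = n + (r-1) + 1 := by omega
  have hq : 2 * (r-1) ≤ n + r := by omega
  obtain ⟨c, b, hb1, hb2⟩ := exists_basis (n+r) (r-1) n hN hq
  let bL : Module.Basis (Fin (r-1) ⊕ₗ Fin n) ℚ (U (n+r)) := b.reindex toLex
  let T : Set.powersetCard (Fin (r-1) ⊕ₗ Fin n) n :=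
    ⟨Finset.univ.image (fun k : Fin n => (toLex (Sum.inr k) : Fin (r-1) ⊕ₗ Fin n)), by
      rw [Set.powersetCard.mem_iff, Finset.card_image_of_injective, Finset.card_univ,
        Fintype.card_fin]
      intro x y hxy
      exact Sum.inr.inj (toLex.injective hxy)⟩
  have hT : ∀ j : Fin (r-1) ⊕ₗ Fin n, j ∈ T ↔ ∃ k, toLex (Sum.inr k) = j := by
    intro j
    rw [← Set.powersetCard.mem_coe_iff]
    simp [T]
  have hT2 : ∀ l, ∃ k, toLex (Sum.inr k) = Set.powersetCard.ofFinEmbEquiv.symm T l := by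
    intro l
    rw [← hT]
    exact (Set.powersetCard.mem_range_ofFinEmbEquiv_symm_iff_mem T _).1 ⟨l, rfl⟩
  choose κ hκ using hT2
  have hω : exteriorPower.ιMulti_family ℚ n bL T =
      exteriorPower.ιMulti ℚ n (EE (n+r) (r-1) ∘ (c ∘ κ)) := by
    rw [exteriorPower.ιMulti_family]
    congr 1
    funext l
    simp only [Function.comp_apply, ← hκ, ← hb2]
    simp [bL]
  refine ⟨c ∘ κ, ?_, ?_⟩
  · rw [← hω, ← exteriorPower.basis_apply]
    exact (bL.exteriorPower n).ne_zero T
  · intro v hv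
    rw [W_mem] at hv
    obtain ⟨hv1, hv2⟩ := hv
    let f : Fin (r-1) ⊕ₗ Fin n → (U (n+r) →ₗ[ℚ] U (n+r)) := fun j =>
      Sum.elim (fun i => permU (n+r) (sw (n+r) (r-1) hq i)) (fun _ => LinearMap.id) (ofLex j)
    have key := mem_span_of_fixed n bL T f ?_ ⟨v, hv1⟩ ?_
    · rw [hω] at key
      exact ⟨_, congrArg Subtype.val key⟩
    · intro j hj i
      obtain ⟨j, rfl⟩ := toLex.surjective j
      obtain ⟨i, rfl⟩ := toLex.surjective i
      rcases j with j | j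
      · rcases i with i | i
        · have h1 : bL (toLex (Sum.inl i)) = dd (n+r) (r-1) hq i := by simp [bL, hb1]
          have := sw_dd (n+r) (r-1) hq j i
          rw [← h1] at this
          refine Eq.trans this ?_
          by_cases hij : i = j
          · subst hij; rw [if_pos rfl, if_pos rfl]
          · rw [if_neg hij, if_neg]
            exact fun h => hij (Sum.inl.inj (toLex.injective h))
        · have h1 : bL (toLex (Sum.inr i)) = EE (n+r) (r-1) (c i) := by simp [bL, hb2]
          rw [if_neg (fun h => by cases toLex.injective h)]
          refine (congrArg (permU (n+r) (sw (n+r) (r-1) hq j)) h1).trans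
            (Eq.trans ?_ h1.symm)
          rw [permU_EE (n+r) (r-1) _ 1 (pp_sw (n+r) (r-1) hq j)]
          rfl
      · exact absurd ((hT _).2 ⟨j, rfl⟩) hj
    · intro j hj
      obtain ⟨j, rfl⟩ := toLex.surjective j
      rcases j with j | j
      · apply Subtype.ext
        have := hv2 _ _ (sw_hyp (n+r) (r-1) hq j)
        simp only [map_one, Units.val_one, Int.cast_one, one_smul] at this
        rw [← act_map]
        exact this
      · exact absurd ((hT _).2 ⟨j, rfl⟩) hj

/-- For `2 ≤ r < n`, the subspace `W ⊆ Λ^n U_{n+r}` above is one-dimensional,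
and every permutation `π ∈ S_{n+r}` fixing the letters `1,…,2r−2` pointwise acts on `W`
by multiplication by `sgn π`. -/
theorem stmt1 (r n : ℕ) (hr : 2 ≤ r) (hrn : r < n) :
    Module.finrank ℚ ↥(Wsub r n) = 1 ∧
    ∀ π : Equiv.Perm (Fin (n+r)), (∀ i : Fin (n+r), (i : ℕ) < 2*(r-1) → π i = i) →
      ∀ v ∈ Wsub r n, act (n+r) π v = ((Equiv.Perm.sign π : ℤ) : ℚ) • v := by
  have hN : n + r = n + (r-1) + 1 := by omega
  have hq : 2 * (r-1) ≤ n + r := by omega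
  obtain ⟨c, h0, hspan⟩ := main_aux r n hr hrn
  have heig : ∀ (π : Equiv.Perm (Fin (n+r))) (ρ : Equiv.Perm (KK (n+r) (r-1))),
      (∀ i, pp (n+r) (r-1) (π i) = ρ (pp (n+r) (r-1) i)) →
      act (n+r) π (exteriorPower.ιMulti ℚ n (EE (n+r) (r-1) ∘ c)) =
        ((Equiv.Perm.sign ρ : ℤ) : ℚ) •
          (exteriorPower.ιMulti ℚ n (EE (n+r) (r-1) ∘ c) : ExteriorAlgebra ℚ ↥(U (n+r))) := by
    intro π ρ h
    have := congrArg Subtype.val (omega_eigen (n+r) (r-1) n hN hq π ρ h c)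
    rw [← act_map] at this
    exact this
  constructor
  · have hmem : (exteriorPower.ιMulti ℚ n (EE (n+r) (r-1) ∘ c) : ExteriorAlgebra ℚ ↥(U (n+r)))
        ∈ Wsub r n := by
      rw [W_mem]
      refine ⟨Subtype.property _, ?_⟩
      intro g τ h
      rw [heig g _ (hyp_rho (n+r) (r-1) g τ h), Equiv.Perm.sign_sumCongr]
      simp
    rw [finrank_eq_one_iff_of_nonzero' (⟨_, hmem⟩ : Wsub r n)]
    · rintro ⟨v, hv⟩
      obtain ⟨a, ha⟩ := hspan v hv
      exact ⟨a, Subtype.ext ha.symm⟩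
    · intro h
      apply h0
      apply Subtype.ext
      exact congrArg (Subtype.val : Wsub r n → _) h
  · intro π hπ v hv
    obtain ⟨a, rfl⟩ := hspan v hv
    rw [map_smul, heig π _ (pi_rho (n+r) (r-1) π hπ), Equiv.Perm.sign_sumCongr, map_one, one_mul,
      Equiv.Perm.sign_subtypePerm, smul_comm]
    intro x hx
    by_contra h
    exact hx (hπ x (by omega))
end

section
/- Let m, k, q be integers with q ≥ 1, 2q ≤ m, 0 ≤ k ≤ m−1 and q ≥ m−k. Let H_q ≤ S_m be the hyperoctahedral subgroup on the pairs P_i = {2i−1, 2i} (i = 1,…,q), with character L_q. Then the only vector v ∈ Λ^k U_m satisfying g·v = L_q(g)·v for all g ∈ H_q is v = 0. (In particular, for 2 ≤ r < n and q ≥ r, the restriction of the hook representation V_{r,1^n} of S_{n+r} to (S_2 ≀ S_q) × S_{n−2q+r} has no irreducible summand of the form L_q ⊠ −.) -/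
set_option synthInstance.maxHeartbeats 1000000
set_option maxHeartbeats 1000000

section Helpers

/-- The transvection `x ↦ x + t φ(x) d`. -/
noncomputable def transv {M : Type*} [AddCommGroup M] [Module ℚ M] (φ : Module.Dual ℚ M) (d : M) (t : ℚ) :
    M →ₗ[ℚ] M := LinearMap.id + t • φ.smulRight d

lemma transv_core {A : Type*} [Ring A] [Algebra ℚ A] (x y b c : A) (t s : ℚ)
    (hyy : y * y = 0) (hxy : x * y + y * x = 0) :
    (x + (t * s) • y) * (b + t • (y * c)) = x * b + t • (y * (s • b - x * c)) := by
  have hdd : y * (y * c) = 0 := by rw [← mul_assoc, hyy, zero_mul]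
  have had : x * (y * c) = - (y * (x * c)) := by
    rw [← mul_assoc, ← mul_assoc, eq_neg_iff_add_eq_zero, ← add_mul, hxy, zero_mul]
  simp only [add_mul, mul_add, mul_sub, smul_mul_assoc, mul_smul_comm, hdd, had, smul_zero,
    smul_sub]
  module

/-- The action of a transvection on the exterior algebra is affine in `t`. -/
lemma map_transv {M : Type*} [AddCommGroup M] [Module ℚ M] (φ : Module.Dual ℚ M) (d : M) (t : ℚ)
    (v : ExteriorAlgebra ℚ M) :
    ExteriorAlgebra.map (transv φ d t) v =
      v + t • (ExteriorAlgebra.ι ℚ d * CliffordAlgebra.contractLeft (Q := 0) φ v) := by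
  induction v using CliffordAlgebra.left_induction with
  | algebraMap r =>
    rw [CliffordAlgebra.contractLeft_algebraMap, mul_zero, smul_zero, add_zero]
    exact AlgHom.commutes _ r
  | add x y hx hy =>
    rw [map_add, hx, hy, map_add, mul_add, smul_add]
    abel
  | ι_mul b a hb =>
    have h1 : ExteriorAlgebra.map (transv φ d t) (CliffordAlgebra.ι (0 : QuadraticForm ℚ M) a) =
        ExteriorAlgebra.ι ℚ a + (t * φ a) • ExteriorAlgebra.ι ℚ d := by
      have := ExteriorAlgebra.map_apply_ι (transv φ d t) a
      refine this.trans ?_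
      simp [transv, mul_smul]
    rw [map_mul, h1, hb, CliffordAlgebra.contractLeft_ι_mul]
    change (ExteriorAlgebra.ι ℚ a + (t * φ a) • ExteriorAlgebra.ι ℚ d) * _ =
      ExteriorAlgebra.ι ℚ a * b + t • (ExteriorAlgebra.ι ℚ d *
        (φ a • b - ExteriorAlgebra.ι ℚ a * _))
    generalize CliffordAlgebra.contractLeft (Q := 0) φ b = c
    exact transv_core _ _ _ _ _ _ (ExteriorAlgebra.ι_sq_zero d) (ExteriorAlgebra.ι_add_mul_swap a d)

lemma map_half_of_map_refl {M : Type*} [AddCommGroup M] [Module ℚ M] (φ : Module.Dual ℚ M) (d : M)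
    (v : ExteriorAlgebra ℚ M) (h : ExteriorAlgebra.map (transv φ d (-1)) v = v) (t : ℚ) :
    ExteriorAlgebra.map (transv φ d t) v = v := by
  rw [map_transv] at h ⊢
  have h0 : ExteriorAlgebra.ι ℚ d * CliffordAlgebra.contractLeft (Q := 0) φ v = 0 := by
    simpa using h
  rw [h0]; simp

/-- A map of small rank kills high exterior powers. -/
lemma map_eq_zero_of_finrank {M : Type*} [AddCommGroup M] [Module ℚ M] [FiniteDimensional ℚ M]
    (P : M →ₗ[ℚ] M) (k : ℕ) (hP : Module.finrank ℚ (LinearMap.range P) < k)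
    (v : ExteriorAlgebra ℚ M) (hv : v ∈ ⋀[ℚ]^k M) : ExteriorAlgebra.map P v = 0 := by
  rw [← ExteriorAlgebra.ιMulti_span_fixedDegree] at hv
  induction hv using Submodule.span_induction with
  | mem x hx =>
    obtain ⟨a, rfl⟩ := hx
    rw [ExteriorAlgebra.map_apply_ιMulti]
    apply AlternatingMap.map_linearDependent
    intro hli
    have hli2 : LinearIndependent ℚ (fun i => (⟨P (a i), ⟨a i, rfl⟩⟩ : LinearMap.range P)) :=
      LinearIndependent.of_comp (LinearMap.range P).subtype hli
    have := hli2.fintype_card_le_finrank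
    simp at this
    omega
  | zero => simp
  | add x y _ _ hx hy => rw [map_add, hx, hy, add_zero]
  | smul c x _ hx => rw [map_smul, hx, smul_zero]

/-- The difference functional. -/
noncomputable def diffF {m : ℕ} (a b : Fin m) : Module.Dual ℚ ↥(U m) :=
  (LinearMap.proj (R := ℚ) (φ := fun _ : Fin m => ℚ) a - LinearMap.proj b).comp (U m).subtype

/-- The difference vector. -/
noncomputable def diffV {m : ℕ} (a b : Fin m) : ↥(U m) :=
  ⟨Pi.single a 1 - Pi.single b 1, by rw [mem_U]; simp⟩

lemma transv_apply {m : ℕ} (a b : Fin m) (t : ℚ) (x : ↥(U m)) (j : Fin m) :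
    (transv (diffF a b) (diffV a b) t x : Fin m → ℚ) j =
      (x : Fin m → ℚ) j + t * ((x : Fin m → ℚ) a - (x : Fin m → ℚ) b) *
        ((if j = a then 1 else 0) - (if j = b then 1 else 0)) := by
  simp [transv, diffF, diffV, Pi.single_apply]
  ring

lemma permU_swap {m : ℕ} (a b : Fin m) (hab : a ≠ b) :
    permU m (Equiv.swap a b) = transv (diffF a b) (diffV a b) (-1) := by
  ext x j
  rw [transv_apply]
  have : (permU m (Equiv.swap a b) x : Fin m → ℚ) j = (x : Fin m → ℚ) (Equiv.swap a b j) := by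
    simp [permU, permMap, LinearMap.funLeft_apply]
  rw [this]
  by_cases h1 : j = a
  · subst h1; simp [hab]
  · by_cases h2 : j = b
    · subst h2; simp [h1]
    · simp [h1, h2, Equiv.swap_apply_of_ne_of_ne h1 h2]

lemma finrank_bound {m q : ℕ} (hq : 1 ≤ q) (h2q : 2*q ≤ m) (W : Submodule ℚ ↥(U m))
    (hW : ∀ x ∈ W, ∀ i (hi : i < q), (x : Fin m → ℚ) ⟨2*i, by omega⟩ =
      (x : Fin m → ℚ) ⟨2*i+1, by omega⟩) : Module.finrank ℚ W ≤ m - q - 1 := by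
  let c : Fin (m - q - 1) → Fin m := fun j =>
    if h : (j : ℕ) + 1 < q then ⟨2*(j+1), by omega⟩ else ⟨j + 1 + q, by omega⟩
  let f : W →ₗ[ℚ] (Fin (m - q - 1) → ℚ) :=
    (LinearMap.funLeft ℚ ℚ c).comp ((U m).subtype.comp W.subtype)
  have hf : Function.Injective f := by
    rw [injective_iff_map_eq_zero]
    rintro ⟨⟨x, hxU⟩, hxW⟩ h0
    have hc : ∀ j, x (c j) = 0 := fun j => congrFun h0 j
    have hp : ∀ i (hi : i < q), x ⟨2*i, by omega⟩ = x ⟨2*i+1, by omega⟩ := hW _ hxW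
    have hz : ∀ j : Fin m, 2 ≤ (j : ℕ) → x j = 0 := by
      intro j hj
      by_cases hjq : (j : ℕ) < 2*q
      · have h1 := hc ⟨(j : ℕ)/2 - 1, by omega⟩
        have h2 : c ⟨(j : ℕ)/2 - 1, by omega⟩ = ⟨2*((j : ℕ)/2), by omega⟩ := by
          simp only [c]
          rw [dif_pos (by omega)]
          ext; simp; omega
        rw [h2] at h1
        have h3 := hp ((j : ℕ)/2) (by omega)
        rcases Nat.even_or_odd' (j : ℕ) with ⟨r, hr | hr⟩
        · rw [← h1]; congr 1; ext; simp; omega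
        · rw [← h1, h3]; congr 1; ext; simp; omega
      · have h1 := hc ⟨(j : ℕ) - q - 1, by omega⟩
        have h2 : c ⟨(j : ℕ) - q - 1, by omega⟩ = j := by
          simp only [c]
          rw [dif_neg (by omega)]
          ext; simp; omega
        rwa [h2] at h1
    have h01 : x ⟨0, by omega⟩ = x ⟨1, by omega⟩ := hp 0 (by omega)
    have hs := (mem_U x).1 hxU
    have hne : (⟨0, by omega⟩ : Fin m) ≠ ⟨1, by omega⟩ := by simp
    rw [Fintype.sum_eq_add _ _ hne (by
      rintro j ⟨hj0, hj1⟩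
      apply hz
      have := mt Fin.ext hj0
      have := mt Fin.ext hj1
      simp at *
      omega)] at hs
    have hx0 : x = 0 := by
      ext j
      by_cases hj : 2 ≤ (j : ℕ)
      · exact hz j hj
      · have : j = ⟨0, by omega⟩ ∨ j = ⟨1, by omega⟩ := by
          rw [Fin.ext_iff, Fin.ext_iff]; simp; omega
        rcases this with h | h <;> rw [h] <;> simp <;> linarith
    subst hx0
    rfl
  simpa using LinearMap.finrank_le_finrank_of_injective hf

end Helpers

/-- Let `m, k, q` be integers with `q ≥ 1`, `2q ≤ m`, `0 ≤ k ≤ m−1` and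
`q ≥ m−k`.  The only vector `v ∈ Λ^k U_m` satisfying `g·v = L_q(g)·v` for all `g` in the
hyperoctahedral subgroup `H_q ≤ S_m` on the pairs `{2i−1, 2i}` is `v = 0`. -/
theorem stmt2 (m k q : ℕ) (hq : 1 ≤ q) (h2q : 2*q ≤ m) (hk : k ≤ m - 1) (hqk : m - k ≤ q)
    (v : ExteriorAlgebra ℚ ↥(U m)) (hv : v ∈ ⋀[ℚ]^k ↥(U m))
    (heig : ∀ (g : Equiv.Perm (Fin m)) (τ : Equiv.Perm (Fin q)), IsHypAt 0 g τ →
      act m g v = ((Equiv.Perm.sign τ : ℤ) : ℚ) • v) :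
    v = 0 := by
  have hswap : ∀ i (hi : i < q), ExteriorAlgebra.map
      (transv (diffF (⟨2*i, by omega⟩ : Fin m) ⟨2*i+1, by omega⟩)
        (diffV ⟨2*i, by omega⟩ ⟨2*i+1, by omega⟩) (-1)) v = v := by
    intro i hi
    rw [← permU_swap _ _ (by simp)]
    have := heig (Equiv.swap ⟨2*i, by omega⟩ ⟨2*i+1, by omega⟩) 1 (by
      constructor
      · intro j hj
        apply Equiv.swap_apply_of_ne_of_ne <;> rw [Ne, Fin.ext_iff] <;> simp <;> omega
      · intro j _ _
        simp only [Equiv.Perm.one_apply]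
        rw [Equiv.swap_apply_def]
        split_ifs with h1 h2
        · subst h1; simp; omega
        · subst h2; simp; omega
        · rfl)
    simpa [act] using this
  have key : ∀ n, n ≤ q → ∃ P : ↥(U m) →ₗ[ℚ] ↥(U m), ExteriorAlgebra.map P v = v ∧
      ∀ x, ∀ i (hi : i < q), i < n → (P x : Fin m → ℚ) ⟨2*i, by omega⟩ =
        (P x : Fin m → ℚ) ⟨2*i+1, by omega⟩ := by
    intro n
    induction n with
    | zero => exact fun _ => ⟨LinearMap.id, by simp, by intro x i hi h; omega⟩
    | succ n ih =>
      intro hn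
      obtain ⟨P, hP, hP2⟩ := ih (by omega)
      refine ⟨(transv (diffF (⟨2*n, by omega⟩ : Fin m) ⟨2*n+1, by omega⟩)
        (diffV ⟨2*n, by omega⟩ ⟨2*n+1, by omega⟩) (-1/2)).comp P, ?_, ?_⟩
      · rw [← ExteriorAlgebra.map_comp_map, AlgHom.comp_apply, hP]
        exact map_half_of_map_refl _ _ _ (hswap n (by omega)) _
      · intro x i hi hin
        rw [LinearMap.comp_apply, transv_apply, transv_apply]
        by_cases h : i = n
        · subst h
          simp
          ring
        · have h1 : 2*i ≠ 2*n+1 := by omega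
          have h2 : 2*i+1 ≠ 2*n := by omega
          simp [h, h1, h2, hP2 x i hi (by omega)]
  obtain ⟨P, hP, hP2⟩ := key q le_rfl
  rw [← hP]
  apply map_eq_zero_of_finrank P k _ v hv
  have := finrank_bound hq h2q (LinearMap.range P) (by
    rintro _ ⟨x, rfl⟩ i hi
    exact hP2 x i hi hi)
  omega
end

section
/- Let j ≥ 1 and N = 4j−1. Let H_{2j−2} ≤ S_N be the hyperoctahedral subgroup on the pairs P_i = {2i+2, 2i+3} (i = 1,…,2j−2), with character L_{2j−2} (for j = 1 this subgroup is trivial and the corresponding condition is vacuous). Then the subspace of Λ^{2j} U_N consisting of all v such that (i) σ·v = sgn(σ)·v for every permutation σ of the letters {1,2,3} fixing all other letters, and (ii) g·v = L_{2j−2}(g)·v for every g ∈ H_{2j−2}, is exactly one-dimensional. (This is the representation-theoretic content of the statement that the θ_{2j+1}-summand of the co-Feynman transform in bidegree (2j+1, 2j) is one-dimensional.) -/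
open Module

/-- the abstract upper bound -/
lemma wedge_span {M : Type*} [AddCommGroup M] [Module ℚ M] {n m : ℕ}
    (b : Basis (Fin n ⊕ₗ Fin m) ℚ M) (s : Fin m → (M →ₗ[ℚ] M))
    (hl : ∀ i a, s i (b (Sum.inlₗ a)) = b (Sum.inlₗ a))
    (hr : ∀ i, s i (b (Sum.inrₗ i)) = - b (Sum.inrₗ i))
    (hr' : ∀ i k, k ≠ i → s i (b (Sum.inrₗ k)) = b (Sum.inrₗ k)) :
    ExteriorAlgebra.ιMulti ℚ n (fun a => b (Sum.inlₗ a)) ≠ 0 ∧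
    ∀ v ∈ ⋀[ℚ]^n M, (∀ i, ExteriorAlgebra.map (s i) v = v) →
      v ∈ Submodule.span ℚ {ExteriorAlgebra.ιMulti ℚ n (fun a => b (Sum.inlₗ a))} := by
  classical
  let emb : Fin n ↪o (Fin n ⊕ₗ Fin m) :=
    OrderEmbedding.ofStrictMono (fun a => Sum.inlₗ a) (fun a c h => Sum.Lex.inl_strictMono h)
  let S0 : Set.powersetCard (Fin n ⊕ₗ Fin m) n := Set.powersetCard.ofFinEmbEquiv emb
  have hS0 : (exteriorPower.ιMulti_family ℚ n b S0 : ExteriorAlgebra ℚ M) =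
      ExteriorAlgebra.ιMulti ℚ n (fun a => b (Sum.inlₗ a)) := by
    rw [exteriorPower.ιMulti_family_apply_coe]
    simp only [ExteriorAlgebra.ιMulti_family, S0, Equiv.symm_apply_apply]
    rfl
  refine ⟨?_, ?_⟩
  · rw [← hS0, ← exteriorPower.basis_apply]
    intro h
    exact (b.exteriorPower n).ne_zero S0 (Subtype.ext h)
  intro v hv hs
  have key : ∀ S : Set.powersetCard (Fin n ⊕ₗ Fin m) n, S ≠ S0 →
      (b.exteriorPower n).repr ⟨v, hv⟩ S = 0 := by
    intro S hS
    obtain ⟨x, hxS, hx0⟩ := (Set.powersetCard.exists_mem_notMem_iff_ne S S0).mp hS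
    obtain ⟨i, rfl⟩ : ∃ i : Fin m, x = Sum.inrₗ i := by
      rcases hx : ofLex x with a | i
      · exfalso
        apply hx0
        rw [Set.powersetCard.mem_ofFinEmbEquiv_iff_mem_range]
        exact ⟨a, by rw [← toLex_ofLex x, hx]; try rfl⟩
      · exact ⟨i, by rw [← toLex_ofLex x, hx]; try rfl⟩
    let ε : Set.powersetCard (Fin n ⊕ₗ Fin m) n → ℚ :=
      fun T => if Sum.inrₗ i ∈ T then -1 else 1
    have hsb : ∀ y, s i (b y) = (if y = Sum.inrₗ i then (-1 : ℚ) else 1) • b y := by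
      intro y
      rcases hx : ofLex y with a | k
      · have : y = Sum.inlₗ a := by rw [← toLex_ofLex y, hx]; try rfl
        subst this
        rw [hl, if_neg, one_smul]
        intro h
        exact Sum.inl_ne_inr (toLex.injective h)
      · have : y = Sum.inrₗ k := by rw [← toLex_ofLex y, hx]; try rfl
        subst this
        by_cases hk : k = i
        · subst hk; rw [hr]; simp
        · rw [hr' _ _ hk, if_neg, one_smul]
          intro h
          exact hk (Sum.inr_injective (toLex.injective h))
    have hmap : ∀ T, exteriorPower.map n (s i) (b.exteriorPower n T) =
        ε T • b.exteriorPower n T := by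
      intro T
      rw [exteriorPower.basis_apply, exteriorPower.map_apply_ιMulti_family]
      simp only [exteriorPower.ιMulti_family]
      have : ((s i ∘ b) ∘ (Set.powersetCard.ofFinEmbEquiv.symm T)) =
          fun r => (if Set.powersetCard.ofFinEmbEquiv.symm T r = Sum.inrₗ i then (-1 : ℚ) else 1) •
            (b ∘ Set.powersetCard.ofFinEmbEquiv.symm T) r := by
        funext r
        exact hsb _
      rw [this, AlternatingMap.map_smul_univ]
      congr 1
      by_cases hT : Sum.inrₗ i ∈ T
      · simp only [ε, if_pos hT]
        obtain ⟨r, hr⟩ := (Set.powersetCard.mem_range_ofFinEmbEquiv_symm_iff_mem T _).mpr hT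
        rw [Finset.prod_eq_single r]
        · rw [if_pos hr]
        · intro r' _ hne
          rw [if_neg]
          intro h
          exact hne ((Set.powersetCard.ofFinEmbEquiv.symm T).injective (h.trans hr.symm))
        · simp
      · simp only [ε, if_neg hT]
        apply Finset.prod_eq_one
        intro r _
        rw [if_neg]
        intro h
        exact hT ((Set.powersetCard.mem_range_ofFinEmbEquiv_symm_iff_mem T _).mp ⟨r, h⟩)
    have hcoe : ∀ z : ⋀[ℚ]^n M, ((exteriorPower.map n (s i) z : ⋀[ℚ]^n M) : ExteriorAlgebra ℚ M) =
        ExteriorAlgebra.map (s i) z := by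
      intro z
      have : (Submodule.subtype _) ∘ₗ (exteriorPower.map n (s i)) =
          (ExteriorAlgebra.map (s i)).toLinearMap ∘ₗ (Submodule.subtype (⋀[ℚ]^n M)) := by
        apply exteriorPower.linearMap_ext
        ext f
        simp [ExteriorAlgebra.map_apply_ιMulti]
      exact LinearMap.congr_fun this z
    have hfix : exteriorPower.map n (s i) ⟨v, hv⟩ = ⟨v, hv⟩ :=
      Subtype.ext ((hcoe _).trans (hs i))
    have hrep : ∀ z, (b.exteriorPower n).repr (exteriorPower.map n (s i) z) S =
        ε S * (b.exteriorPower n).repr z S := by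
      intro z
      have : (b.exteriorPower n).coord S ∘ₗ exteriorPower.map n (s i) =
          ε S • (b.exteriorPower n).coord S := by
        apply (b.exteriorPower n).ext
        intro T
        simp only [LinearMap.comp_apply, hmap, map_smul, LinearMap.smul_apply, Basis.coord_apply,
          Basis.repr_self, smul_eq_mul]
        by_cases hTS : T = S
        · subst hTS; rfl
        · simp [hTS]
      exact LinearMap.congr_fun this z
    have h1 := hrep ⟨v, hv⟩
    rw [hfix] at h1
    simp only [ε, if_pos hxS] at h1
    linarith
  rw [← hS0, Submodule.mem_span_singleton]
  refine ⟨(b.exteriorPower n).repr ⟨v, hv⟩ S0, ?_⟩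
  have : (⟨v, hv⟩ : ⋀[ℚ]^n M) = (b.exteriorPower n).repr ⟨v, hv⟩ S0 • b.exteriorPower n S0 := by
    apply (b.exteriorPower n).repr.injective
    ext T
    by_cases hT : T = S0
    · subst hT; simp
    · rw [key T hT]; simp [exteriorPower.basis_repr, Ne.symm hT]
  have h2 := congrArg (Subtype.val) this
  rw [exteriorPower.basis_apply] at h2
  exact h2.symm


lemma U_ext {N : ℕ} {x y : U N} (h : ∀ i, (x : Fin N → ℚ) i = (y : Fin N → ℚ) i) : x = y :=
  Subtype.ext (funext h)

lemma permU_apply {N : ℕ} (σ : Equiv.Perm (Fin N)) (x : U N) (i : Fin N) :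
    (permU N σ x : Fin N → ℚ) i = (x : Fin N → ℚ) (σ⁻¹ i) := rfl

/-- sums over `Fin (2q+3)` -/
lemma sum_split (q : ℕ) (f : ℕ → ℚ) :
    ∑ i : Fin (2*q+3), f i = f 0 + f 1 + f 2 + ∑ i : Fin q, (f (3 + 2*i) + f (4 + 2*i)) := by
  rw [Fin.sum_univ_eq_sum_range, Fin.sum_univ_eq_sum_range (fun i => f (3 + 2*i) + f (4 + 2*i))]
  induction q with
  | zero => simp [Finset.sum_range_succ]
  | succ q ih =>
    rw [show 2*(q+1)+3 = 2*q+3+1+1 by ring, Finset.sum_range_succ, Finset.sum_range_succ, ih,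
      Finset.sum_range_succ, show 3 + 2*q = 2*q+3 by ring, show 4+2*q = 2*q+3+1 by ring]
    ring

noncomputable section

def uFun (c : Fin 3) (x : ℕ) : ℚ := if x = c then 2/3 else if x < 3 then -1/3 else 0
def aFun (i : ℕ) (x : ℕ) : ℚ := if x < 3 then -2/3 else if (x-3)/2 = i then 1 else 0
def bFun (i : ℕ) (x : ℕ) : ℚ := if x = 3 + 2*i then 1 else if x = 4 + 2*i then -1 else 0

def uVec (q : ℕ) (c : Fin 3) : U (2*q+3) := ⟨fun x => uFun c x, by
  rw [mem_U, sum_split]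
  have : ∀ i : Fin q, uFun c (3 + 2*i) + uFun c (4+2*i) = 0 := by
    intro i
    have := c.2
    simp only [uFun]
    rw [if_neg (by omega), if_neg (by omega), if_neg (by omega), if_neg (by omega)]
    norm_num
  simp only [this]
  fin_cases c <;> norm_num [uFun]⟩

def aVec (q : ℕ) (i : Fin q) : U (2*q+3) := ⟨fun x => aFun i x, by
  rw [mem_U, sum_split]
  have : ∀ k : Fin q, aFun i (3 + 2*k) + aFun i (4+2*k) = if k = i then 2 else 0 := by
    intro k
    simp only [aFun]
    rw [if_neg (show ¬ (3 + 2*(k:ℕ) < 3) by omega), if_neg (show ¬ (4 + 2*(k:ℕ) < 3) by omega)]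
    have e1 : (3 + 2*(k:ℕ) - 3)/2 = k := by omega
    have e2 : (4 + 2*(k:ℕ) - 3)/2 = k := by omega
    rw [e1, e2]
    by_cases h : k = i
    · subst h; norm_num
    · have : (k:ℕ) ≠ i := fun h' => h (Fin.ext h')
      simp [h, this]
  simp only [this]
  norm_num [aFun]⟩

def bVec (q : ℕ) (i : Fin q) : U (2*q+3) := ⟨fun x => bFun i x, by
  rw [mem_U, sum_split]
  have : ∀ k : Fin q, bFun i (3 + 2*k) + bFun i (4+2*k) = 0 := by
    intro k
    simp only [bFun]
    by_cases h : (k:ℕ) = i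
    · rw [if_pos (by omega), if_neg (by omega), if_pos (by omega)]; norm_num
    · rw [if_neg (by omega), if_neg (by omega), if_neg (by omega), if_neg (by omega)]; norm_num
  simp only [this]
  simp only [bFun]
  rw [if_neg (by omega), if_neg (by omega), if_neg (by omega), if_neg (by omega), if_neg (by omega), if_neg (by omega)]
  norm_num⟩

/-- evaluation at a letter -/
def ev (q : ℕ) (x : Fin (2*q+3)) : Dual ℚ (U (2*q+3)) := LinearMap.proj x ∘ₗ (U (2*q+3)).subtype

def lVec (q : ℕ) : Fin (q+2) → U (2*q+3) :=
  Fin.cons (uVec q 0) (Fin.cons (uVec q 1) (aVec q))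

def lDual (q : ℕ) : Fin (q+2) → Dual ℚ (U (2*q+3)) :=
  Fin.cons (ev q ⟨0, by omega⟩ - ev q ⟨2, by omega⟩)
    (Fin.cons (ev q ⟨1, by omega⟩ - ev q ⟨2, by omega⟩)
      (fun i : Fin q => (1/2 : ℚ) • (ev q ⟨3+2*i, by omega⟩ + ev q ⟨4+2*i, by omega⟩)))

def rDual (q : ℕ) (i : Fin q) : Dual ℚ (U (2*q+3)) :=
  (1/2 : ℚ) • (ev q ⟨3+2*i, by omega⟩ - ev q ⟨4+2*i, by omega⟩)

def allVec (q : ℕ) (x : Fin (q+2) ⊕ₗ Fin q) : U (2*q+3) := Sum.elim (lVec q) (bVec q) (ofLex x)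
def allDual (q : ℕ) (x : Fin (q+2) ⊕ₗ Fin q) : Dual ℚ (U (2*q+3)) :=
  Sum.elim (lDual q) (rDual q) (ofLex x)

lemma ev_u (q : ℕ) (x) (c) : ev q x (uVec q c) = uFun c x := rfl
lemma ev_a (q : ℕ) (x) (c) : ev q x (aVec q c) = aFun c x := rfl
lemma ev_b (q : ℕ) (x) (c) : ev q x (bVec q c) = bFun c x := rfl

lemma uFun_ge {c : Fin 3} {x : ℕ} (h : 3 ≤ x) : uFun c x = 0 := by
  have := c.2
  simp only [uFun]; rw [if_neg (by omega), if_neg (by omega)]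
lemma aFun_lt {i x : ℕ} (h : x < 3) : aFun i x = -2/3 := by
  simp only [aFun]; rw [if_pos h]
lemma aFun_l {i k : ℕ} : aFun i (3+2*k) = if k = i then 1 else 0 := by
  simp only [aFun]; rw [if_neg (by omega), show (3+2*k-3)/2 = k by omega]
lemma aFun_r {i k : ℕ} : aFun i (4+2*k) = if k = i then 1 else 0 := by
  simp only [aFun]; rw [if_neg (by omega), show (4+2*k-3)/2 = k by omega]
lemma bFun_lt {i x : ℕ} (h : x < 3) : bFun i x = 0 := by
  simp only [bFun]; rw [if_neg (by omega), if_neg (by omega)]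
lemma bFun_l {i k : ℕ} : bFun i (3+2*k) = if k = i then 1 else 0 := by
  simp only [bFun]; split_ifs <;> first | rfl | omega
lemma bFun_r {i k : ℕ} : bFun i (4+2*k) = if k = i then -1 else 0 := by
  simp only [bFun]; split_ifs <;> first | rfl | omega

lemma dual_all (q : ℕ) (x y : Fin (q+2) ⊕ₗ Fin q) :
    allDual q x (allVec q y) = if x = y then 1 else 0 := by
  have e : (x = y) ↔ (ofLex x = ofLex y) := ofLex.injective.eq_iff.symm
  rw [if_congr e rfl rfl]
  simp only [allDual, allVec]
  generalize ofLex x = x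
  generalize ofLex y = y
  have h34 : ∀ k : ℕ, 3 ≤ 4 + 2*k := fun k => by omega
  rcases x with x | x <;> rcases y with y | y
  · simp only [Sum.elim_inl, Sum.inl.injEq, lDual, lVec]
    refine Fin.cases ?_ (fun x => ?_) x <;> [skip; refine Fin.cases ?_ (fun x => ?_) x] <;>
    (refine Fin.cases ?_ (fun y => ?_) y <;> [skip; refine Fin.cases ?_ (fun y => ?_) y]) <;>
    simp only [Fin.cons_zero, Fin.cons_succ, LinearMap.sub_apply, LinearMap.add_apply,
      LinearMap.smul_apply, ev_u, ev_a, aFun_l, aFun_r, aFun_lt (show 0 < 3 by omega),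
      aFun_lt (show 1 < 3 by omega), aFun_lt (show 2 < 3 by omega), 
      uFun_ge (Nat.le_add_right 3 _), uFun_ge (h34 _), Fin.ext_iff]
    all_goals first | (norm_num [uFun]; done) | skip
    simp only [Fin.val_succ, add_left_inj]
    split_ifs <;> norm_num
  · simp only [Sum.elim_inl, Sum.elim_inr, lDual]
    refine Fin.cases ?_ (fun x => ?_) x <;> [skip; refine Fin.cases ?_ (fun x => ?_) x] <;>
    simp only [Fin.cons_zero, Fin.cons_succ, LinearMap.sub_apply, LinearMap.add_apply,
      LinearMap.smul_apply, ev_b, bFun_l, bFun_r, bFun_lt (show 0 < 3 by omega),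
      bFun_lt (show 1 < 3 by omega), bFun_lt (show 2 < 3 by omega)]
    · simp
    · simp
    · split_ifs <;> simp_all
  · simp only [Sum.elim_inl, Sum.elim_inr, rDual, lVec]
    refine Fin.cases ?_ (fun y => ?_) y <;> [skip; refine Fin.cases ?_ (fun y => ?_) y] <;>
    simp [ev_u, ev_a, aFun_l, aFun_r, uFun_ge (Nat.le_add_right 3 _), uFun_ge (h34 _)]
  · simp only [Sum.elim_inr, rDual, LinearMap.sub_apply, 
      LinearMap.smul_apply, ev_b, bFun_l, bFun_r, Sum.inr.injEq, Fin.ext_iff]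
    split_ifs <;> norm_num

lemma finrank_U_s3 (q : ℕ) : finrank ℚ (U (2*q+3)) = 2*q+2 := by
  have h := LinearMap.finrank_range_add_finrank_ker (sumMap (2*q+3))
  have hs : LinearMap.range (sumMap (2*q+3)) = ⊤ := by
    rw [LinearMap.range_eq_top]
    intro c
    exact ⟨Pi.single 0 c, by simp [sumMap]⟩
  rw [hs] at h
  simp at h
  change 1 + finrank ℚ (U (2*q+3)) = _ at h
  omega

lemma li_all (q : ℕ) : LinearIndependent ℚ (allVec q) :=
  LinearIndependent.of_pairwise_dual_eq_zero_one _ (allDual q)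
    (fun x y h => by show allDual q x (allVec q y) = 0; rw [dual_all, if_neg h]) (fun x => by rw [dual_all, if_pos rfl])

def theBasis (q : ℕ) : Basis (Fin (q+2) ⊕ₗ Fin q) ℚ (U (2*q+3)) :=
  haveI : Nonempty (Fin (q+2) ⊕ₗ Fin q) := ⟨Sum.inlₗ 0⟩
  basisOfLinearIndependentOfCardEqFinrank (li_all q) (by
    rw [finrank_U_s3]
    have : Fintype.card (Fin (q+2) ⊕ₗ Fin q) = Fintype.card (Fin (q+2) ⊕ Fin q) :=
      Fintype.card_congr ofLex
    rw [this]; simp; omega)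

lemma theBasis_apply (q : ℕ) (x) : theBasis q x = allVec q x := by
  simp [theBasis]

end

lemma mem_eigen {V : Type*} [AddCommGroup V] [Module ℚ V] (f : V →ₗ[ℚ] V) (c : ℚ) (v : V) :
    v ∈ eigen f c ↔ f v = c • v := by
  simp [eigen, LinearMap.mem_ker, sub_eq_zero]

/-- the spanning vector -/
noncomputable def wVec (q : ℕ) : ExteriorAlgebra ℚ (U (2*q+3)) :=
  ExteriorAlgebra.ιMulti ℚ (q+2) (lVec q)

lemma wVec_eq (q : ℕ) : wVec q = ExteriorAlgebra.ι ℚ (uVec q 0) *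
    (ExteriorAlgebra.ι ℚ (uVec q 1) * ExteriorAlgebra.ιMulti ℚ q (aVec q)) := by
  rw [wVec, ExteriorAlgebra.ιMulti_succ_apply, ExteriorAlgebra.ιMulti_succ_apply]
  rfl

lemma act_wVec (q : ℕ) (σ : Equiv.Perm (Fin (2*q+3))) : act (2*q+3) σ (wVec q) =
    ExteriorAlgebra.ι ℚ (permU _ σ (uVec q 0)) *
    (ExteriorAlgebra.ι ℚ (permU _ σ (uVec q 1)) *
      ExteriorAlgebra.ιMulti ℚ q (fun i => permU _ σ (aVec q i))) := by
  rw [wVec_eq]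
  simp only [act, AlgHom.toLinearMap_apply, map_mul, ExteriorAlgebra.map_apply_ι,
    ExteriorAlgebra.map_apply_ιMulti]
  rfl

lemma perm_apply_inv {α : Type*} (g : Equiv.Perm α) (x : α) : g (g⁻¹ x) = x :=
  Equiv.apply_symm_apply g x

lemma hyp_inv_lt {q : ℕ} {g : Equiv.Perm (Fin (2*q+3))} {τ : Equiv.Perm (Fin q)}
    (h : IsHypAt 3 g τ) (x : Fin (2*q+3)) (hx : (x : ℕ) < 3) : g⁻¹ x = x := by
  rw [Equiv.Perm.inv_eq_iff_eq, h.1 x (Or.inl hx)]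

lemma hyp_inv_ge {q : ℕ} {g : Equiv.Perm (Fin (2*q+3))} {τ : Equiv.Perm (Fin q)}
    (h : IsHypAt 3 g τ) (x : Fin (2*q+3)) (hx : 3 ≤ (x : ℕ)) : 3 ≤ ((g⁻¹ x : Fin _) : ℕ) := by
  by_contra hlt
  push Not at hlt
  have h1 := h.1 (g⁻¹ x) (Or.inl hlt)
  rw [perm_apply_inv] at h1
  rw [← h1] at hlt
  omega

lemma hyp_u {q : ℕ} {g : Equiv.Perm (Fin (2*q+3))} {τ : Equiv.Perm (Fin q)}
    (h : IsHypAt 3 g τ) (c : Fin 3) : permU _ g (uVec q c) = uVec q c := by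
  apply U_ext
  intro x
  rw [permU_apply]
  change uFun c _ = uFun c _
  by_cases hx : (x : ℕ) < 3
  · rw [hyp_inv_lt h x hx]
  · rw [uFun_ge (hyp_inv_ge h x (by omega)), uFun_ge (by omega)]

lemma hyp_a {q : ℕ} {g : Equiv.Perm (Fin (2*q+3))} {τ : Equiv.Perm (Fin q)}
    (h : IsHypAt 3 g τ) (i : Fin q) : permU _ g (aVec q i) = aVec q (τ i) := by
  apply U_ext
  intro x
  rw [permU_apply]
  change aFun i _ = aFun (τ i) _
  by_cases hx : (x : ℕ) < 3
  · rw [hyp_inv_lt h x hx, aFun_lt hx, aFun_lt hx]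
  · have h3 := hyp_inv_ge h x (by omega)
    have h2 := h.2 (g⁻¹ x) h3 (by omega)
    rw [perm_apply_inv] at h2
    simp only [aFun]
    rw [if_neg (by omega), if_neg hx, h2]
    refine if_congr ?_ rfl rfl
    rw [← Fin.ext_iff, τ.injective.eq_iff, Fin.ext_iff]

lemma hyp_w {q : ℕ} {g : Equiv.Perm (Fin (2*q+3))} {τ : Equiv.Perm (Fin q)}
    (h : IsHypAt 3 g τ) : act _ g (wVec q) = ((Equiv.Perm.sign τ : ℤ) : ℚ) • wVec q := by
  rw [act_wVec, wVec_eq, hyp_u h, hyp_u h]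
  simp only [hyp_a h]
  have := (ExteriorAlgebra.ιMulti ℚ q).map_perm (aVec q) τ
  change (ExteriorAlgebra.ιMulti ℚ q) (fun i => aVec q (τ i)) = _ at this
  rw [this]
  rcases Int.units_eq_one_or (Equiv.Perm.sign τ) with h | h <;> rw [h] <;> simp

lemma u_sum (q : ℕ) : uVec q 2 = - uVec q 0 - uVec q 1 := by
  apply U_ext
  intro x
  change uFun 2 x = - uFun 0 x - uFun 1 x
  simp only [uFun]
  have h0 : ((0 : Fin 3) : ℕ) = 0 := rfl
  have h1 : ((1 : Fin 3) : ℕ) = 1 := rfl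
  have h2 : ((2 : Fin 3) : ℕ) = 2 := rfl
  rw [h0, h1, h2]
  split_ifs <;> first | omega | norm_num

lemma perm3 : ∀ π : Equiv.Perm (Fin 3),
    (π 0 = 0 ∧ π 1 = 1 ∧ Equiv.Perm.sign π = 1) ∨ (π 0 = 1 ∧ π 1 = 0 ∧ Equiv.Perm.sign π = -1) ∨
    (π 0 = 0 ∧ π 1 = 2 ∧ Equiv.Perm.sign π = -1) ∨ (π 0 = 2 ∧ π 1 = 0 ∧ Equiv.Perm.sign π = 1) ∨
    (π 0 = 1 ∧ π 1 = 2 ∧ Equiv.Perm.sign π = 1) ∨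
    (π 0 = 2 ∧ π 1 = 1 ∧ Equiv.Perm.sign π = -1) := by
  decide

lemma wedge3 (q : ℕ) (π : Equiv.Perm (Fin 3)) :
    ExteriorAlgebra.ι ℚ (uVec q (π 0)) * ExteriorAlgebra.ι ℚ (uVec q (π 1)) =
    ((Equiv.Perm.sign π : ℤ) : ℚ) •
      (ExteriorAlgebra.ι ℚ (uVec q 0) * ExteriorAlgebra.ι ℚ (uVec q 1)) := by
  have e0 := ExteriorAlgebra.ι_sq_zero (R := ℚ) (uVec q 0)
  have e1 := ExteriorAlgebra.ι_sq_zero (R := ℚ) (uVec q 1)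
  have e2 : ExteriorAlgebra.ι ℚ (uVec q 1) * ExteriorAlgebra.ι ℚ (uVec q 0) =
      - (ExteriorAlgebra.ι ℚ (uVec q 0) * ExteriorAlgebra.ι ℚ (uVec q 1)) :=
    eq_neg_of_add_eq_zero_left (ExteriorAlgebra.ι_add_mul_swap _ _)
  rcases perm3 π with ⟨h0, h1, h2⟩ | ⟨h0, h1, h2⟩ | ⟨h0, h1, h2⟩ | ⟨h0, h1, h2⟩ | ⟨h0, h1, h2⟩ |
    ⟨h0, h1, h2⟩ <;> rw [h0, h1, h2] <;>
    simp [u_sum, mul_sub, sub_mul, e0, e1, e2]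

lemma fix_inv {q : ℕ} {σ : Equiv.Perm (Fin (2*q+3))}
    (h : ∀ i : Fin (2*q+3), 3 ≤ (i : ℕ) → σ i = i) (x : Fin (2*q+3)) (hx : 3 ≤ (x : ℕ)) :
    σ⁻¹ x = x := by
  rw [Equiv.Perm.inv_eq_iff_eq, h x hx]

lemma fix_lt {q : ℕ} {σ : Equiv.Perm (Fin (2*q+3))}
    (h : ∀ i : Fin (2*q+3), 3 ≤ (i : ℕ) → σ i = i) (x : Fin (2*q+3)) :
    ((σ x : Fin _) : ℕ) < 3 ↔ (x : ℕ) < 3 := by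
  constructor
  · intro hx
    by_contra hc
    rw [h x (by omega)] at hx
    omega
  · intro hx
    by_contra hc
    have := σ.injective (h (σ x) (by omega))
    rw [this] at hc
    omega

lemma exists_perm3 {q : ℕ} {σ : Equiv.Perm (Fin (2*q+3))}
    (h : ∀ i : Fin (2*q+3), 3 ≤ (i : ℕ) → σ i = i) :
    ∃ π : Equiv.Perm (Fin 3), Equiv.Perm.sign π = Equiv.Perm.sign σ ∧
      ∀ c : Fin 3, ((σ ⟨c, by omega⟩ : Fin _) : ℕ) = π c := by
  let f : {x : Fin (2*q+3) // (x : ℕ) < 3} ≃ Fin 3 :=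
    { toFun := fun x => ⟨x.1, x.2⟩
      invFun := fun c => ⟨⟨c, by omega⟩, c.2⟩
      left_inv := fun x => rfl
      right_inv := fun c => rfl }
  refine ⟨f.permCongr (σ.subtypePerm (p := fun x : Fin (2*q+3) => (x : ℕ) < 3) (fun x => fix_lt h x)), ?_, ?_⟩
  · rw [Equiv.Perm.sign_permCongr, Equiv.Perm.sign_subtypePerm]
    intro x hx
    by_contra hc
    exact hx (h x (by omega))
  · intro c
    rfl

lemma sgn_w {q : ℕ} {σ : Equiv.Perm (Fin (2*q+3))}
    (h : ∀ i : Fin (2*q+3), 3 ≤ (i : ℕ) → σ i = i) :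
    act _ σ (wVec q) = ((Equiv.Perm.sign σ : ℤ) : ℚ) • wVec q := by
  obtain ⟨π, hs, hπ⟩ := exists_perm3 h
  have hu : ∀ c, permU _ σ (uVec q c) = uVec q (π c) := by
    intro c
    apply U_ext
    intro x
    rw [permU_apply]
    change uFun c _ = uFun (π c) _
    by_cases hx : (x : ℕ) < 3
    · have h1 : ((σ⁻¹ x : Fin _) : ℕ) < 3 := by
        rw [← fix_lt h, perm_apply_inv]; exact hx
      simp only [uFun]
      rw [if_pos hx, if_pos h1]
      refine if_congr ?_ rfl rfl
      rw [← hπ c, ← Fin.ext_iff, ← Equiv.Perm.inv_eq_iff_eq, Fin.ext_iff]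
    · rw [fix_inv h x (by omega), uFun_ge (by omega), uFun_ge (by omega)]
  have ha : ∀ i, permU _ σ (aVec q i) = aVec q i := by
    intro i
    apply U_ext
    intro x
    rw [permU_apply]
    change aFun i _ = aFun i _
    by_cases hx : (x : ℕ) < 3
    · have h1 : ((σ⁻¹ x : Fin _) : ℕ) < 3 := by
        rw [← fix_lt h, perm_apply_inv]; exact hx
      rw [aFun_lt h1, aFun_lt hx]
    · rw [fix_inv h x (by omega)]
  rw [act_wVec, wVec_eq]
  simp only [hu, ha]
  rw [← mul_assoc, wedge3, hs, smul_mul_assoc, mul_assoc]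

/-- the swap of the two letters of a pair -/
def pairSwap (q : ℕ) (i : Fin q) : Equiv.Perm (Fin (2*q+3)) :=
  Equiv.swap ⟨3+2*i, by omega⟩ ⟨4+2*i, by omega⟩

lemma pairSwap_val (q : ℕ) (i : Fin q) (x : Fin (2*q+3)) :
    ((pairSwap q i x : Fin _) : ℕ) =
      if (x : ℕ) = 3+2*i then 4+2*(i : ℕ) else if (x : ℕ) = 4+2*i then 3+2*(i : ℕ) else (x : ℕ) := by
  simp only [pairSwap, Equiv.swap_apply_def, Fin.ext_iff]
  split_ifs <;> rfl

lemma pairSwap_hyp (q : ℕ) (i : Fin q) : IsHypAt 3 (pairSwap q i) (1 : Equiv.Perm (Fin q)) := by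
  constructor
  · intro x hx
    apply Fin.ext
    rw [pairSwap_val]
    split_ifs <;> omega
  · intro x h1 h2
    rw [pairSwap_val]
    simp only [Equiv.Perm.one_apply]
    split_ifs <;> omega

lemma pairSwap_b (q : ℕ) (i k : Fin q) : permU _ (pairSwap q i) (bVec q k) =
    if k = i then - bVec q k else bVec q k := by
  apply U_ext
  intro x
  rw [permU_apply]
  have hinv : (pairSwap q i)⁻¹ = pairSwap q i := Equiv.swap_inv _ _
  rw [hinv]
  split_ifs with h
  · subst h
    change bFun k _ = - bFun k _
    rw [pairSwap_val]
    simp only [bFun]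
    split_ifs <;> first | omega | norm_num
  · change bFun k _ = bFun k _
    have h' : (k : ℕ) ≠ i := fun h' => h (Fin.ext h')
    rw [pairSwap_val]
    simp only [bFun]
    split_ifs <;> first | omega | norm_num

theorem main_q (q : ℕ) :
    Module.finrank ℚ
      ↥((⋀[ℚ]^(q+2) ↥(U (2*q+3))) ⊓
        (⨅ (σ : Equiv.Perm (Fin (2*q+3))) (_ : ∀ i : Fin (2*q+3), 3 ≤ (i : ℕ) → σ i = i),
          eigen (act (2*q+3) σ) ((Equiv.Perm.sign σ : ℤ) : ℚ)) ⊓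
        ⨅ (g : Equiv.Perm (Fin (2*q+3))) (τ : Equiv.Perm (Fin q)) (_ : IsHypAt 3 g τ),
          eigen (act (2*q+3) g) ((Equiv.Perm.sign τ : ℤ) : ℚ)) = 1 := by
  have hb : ∀ a, theBasis q (Sum.inlₗ a) = lVec q a := fun a => theBasis_apply q _
  have hb' : ∀ a, theBasis q (Sum.inrₗ a) = bVec q a := fun a => theBasis_apply q _
  obtain ⟨hne, hsp⟩ := wedge_span (theBasis q) (fun i => permU _ (pairSwap q i))
    (by
      intro i a
      simp only [hb]
      refine Fin.cases ?_ (fun a => ?_) a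
      · exact hyp_u (pairSwap_hyp q i) _
      refine Fin.cases ?_ (fun a => ?_) a
      · exact hyp_u (pairSwap_hyp q i) _
      · exact hyp_a (pairSwap_hyp q i) _)
    (by intro i; simp only [hb', pairSwap_b, if_true])
    (by intro i k hk; simp only [hb', pairSwap_b, if_neg hk])
  simp only [hb] at hne hsp
  change wVec q ≠ 0 at hne
  have : ((⋀[ℚ]^(q+2) ↥(U (2*q+3))) ⊓
        (⨅ (σ : Equiv.Perm (Fin (2*q+3))) (_ : ∀ i : Fin (2*q+3), 3 ≤ (i : ℕ) → σ i = i),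
          eigen (act (2*q+3) σ) ((Equiv.Perm.sign σ : ℤ) : ℚ)) ⊓
        ⨅ (g : Equiv.Perm (Fin (2*q+3))) (τ : Equiv.Perm (Fin q)) (_ : IsHypAt 3 g τ),
          eigen (act (2*q+3) g) ((Equiv.Perm.sign τ : ℤ) : ℚ)) =
      Submodule.span ℚ {wVec q} := by
    apply le_antisymm
    · intro v hv
      simp only [Submodule.mem_inf, Submodule.mem_iInf, mem_eigen] at hv
      obtain ⟨⟨h1, -⟩, h3⟩ := hv
      apply hsp v h1
      intro i
      have := h3 _ _ (pairSwap_hyp q i)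
      simpa [act] using this
    · rw [Submodule.span_singleton_le_iff_mem]
      simp only [Submodule.mem_inf, Submodule.mem_iInf, mem_eigen]
      refine ⟨⟨?_, fun σ h => sgn_w h⟩, fun g τ h => hyp_w h⟩
      exact (exteriorPower.ιMulti ℚ (q+2) (lVec q)).2
  rw [this]
  exact finrank_span_singleton hne

theorem main_gen (N k q : ℕ) (hN : N = 2*q+3) (hk : k = q+2) :
    Module.finrank ℚ
      ↥((⋀[ℚ]^k ↥(U N)) ⊓
        (⨅ (σ : Equiv.Perm (Fin N)) (_ : ∀ i : Fin N, 3 ≤ (i : ℕ) → σ i = i),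
          eigen (act N σ) ((Equiv.Perm.sign σ : ℤ) : ℚ)) ⊓
        ⨅ (g : Equiv.Perm (Fin N)) (τ : Equiv.Perm (Fin q)) (_ : IsHypAt 3 g τ),
          eigen (act N g) ((Equiv.Perm.sign τ : ℤ) : ℚ)) = 1 := by
  subst hN hk
  exact main_q q


/-- Let `j ≥ 1` and `N = 4j−1`.  The subspace of `Λ^{2j} U_N` of vectors `v` such
that (i) every permutation of the letters `{1,2,3}` fixing the other letters acts on `v` by its
sign, and (ii) every element of the hyperoctahedral subgroup `H_{2j−2}` on the pairs
`{2i+2, 2i+3}` (`i = 1,…,2j−2`) acts on `v` by `L_{2j−2}`, is exactly one-dimensional. -/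
theorem stmt3 (j : ℕ) (hj : 1 ≤ j) :
    Module.finrank ℚ
      ↥((⋀[ℚ]^(2*j) ↥(U (4*j-1))) ⊓
        (⨅ (σ : Equiv.Perm (Fin (4*j-1))) (_ : ∀ i : Fin (4*j-1), 3 ≤ (i : ℕ) → σ i = i),
          eigen (act (4*j-1) σ) ((Equiv.Perm.sign σ : ℤ) : ℚ)) ⊓
        ⨅ (g : Equiv.Perm (Fin (4*j-1))) (τ : Equiv.Perm (Fin (2*j-2))) (_ : IsHypAt 3 g τ),
          eigen (act (4*j-1) g) ((Equiv.Perm.sign τ : ℤ) : ℚ)) = 1 := by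
  exact main_gen _ _ _ (by omega) (by omega)
end

section
/- Let t ≥ 2 and j ≥ 1, let G = S_{t+2j}, and set z = (1 + (1 t+1) + (2 t+1) + ⋯ + (t t+1)) · y ∈ ℚ[G], where (i t+1) denotes a transposition. Then z ≠ 0, and the left ideal ℚ[G]·z is a simple left ℚ[G]-module isomorphic to Λ^{2j−1} U_{t+2j} (the irreducible hook representation V_{t+1,1^{2j−1}}). -/
noncomputable section

set_option synthInstance.maxHeartbeats 1000000
set_option maxHeartbeats 1000000

/-- `y = (∑_{σ ∈ S_{1,…,t}} σ) · (∑_{τ ∈ S_{t+1,…,t+2j}} sgn(τ) τ)` in the group algebra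
`ℚ[S_{t+2j}]`, where `S_A` is the subgroup of permutations fixing every letter outside `A`. -/
def yElt (t j : ℕ) : MonoidAlgebra ℚ (Equiv.Perm (Fin (t + 2*j))) :=
  (∑ σ ∈ Finset.univ.filter
      (fun σ : Equiv.Perm (Fin (t + 2*j)) => ∀ i : Fin (t + 2*j), t ≤ (i : ℕ) → σ i = i),
    MonoidAlgebra.of ℚ _ σ) *
  (∑ τ ∈ Finset.univ.filter
      (fun τ : Equiv.Perm (Fin (t + 2*j)) => ∀ i : Fin (t + 2*j), (i : ℕ) < t → τ i = i),
    ((Equiv.Perm.sign τ : ℤ) : ℚ) • MonoidAlgebra.of ℚ _ τ)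

/-- `z = (1 + (1 t+1) + (2 t+1) + ⋯ + (t t+1)) · y` in `ℚ[S_{t+2j}]`. -/
def zElt (t j : ℕ) (hj : 1 ≤ j) : MonoidAlgebra ℚ (Equiv.Perm (Fin (t + 2*j))) :=
  (1 + ∑ i : Fin t, MonoidAlgebra.of ℚ _
      (Equiv.swap (Fin.castLE (by omega) i) (⟨t, by omega⟩ : Fin (t + 2*j)))) * yElt t j

end

noncomputable section

section GroupAlg
open Equiv MonoidAlgebra

variable {α : Type} [Fintype α] [DecidableEq α]

/-- antisymmetrizer of the letters in `B` -/
def asym6 (B : α → Prop) [DecidablePred B] : MonoidAlgebra ℚ (Perm α) :=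
  ∑ τ ∈ Finset.univ.filter (fun τ : Perm α => ∀ i, ¬ B i → τ i = i),
    ((Perm.sign τ : ℤ) : ℚ) • MonoidAlgebra.of ℚ _ τ

/-- symmetrizer of the letters outside `B` -/
def sym6 (B : α → Prop) [DecidablePred B] : MonoidAlgebra ℚ (Perm α) :=
  ∑ σ ∈ Finset.univ.filter (fun σ : Perm α => ∀ i, B i → σ i = i), MonoidAlgebra.of ℚ _ σ

/-- the subset `B` with the corner removed -/
abbrev cut6 (B : α → Prop) (b : α) : α → Prop := fun i => B i ∧ i ≠ b

lemma sym6_mul (B : α → Prop) [DecidablePred B] (p : Perm α) (hp : ∀ i, B i → p i = i) :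
    sym6 B * MonoidAlgebra.of ℚ _ p = sym6 B := by
  unfold sym6
  rw [Finset.sum_mul]
  refine Finset.sum_nbij' (fun σ => σ * p) (fun σ => σ * p⁻¹) ?_ ?_ ?_ ?_ ?_
  · intro σ hσ
    simp only [Finset.mem_filter, Finset.mem_univ, true_and] at hσ ⊢
    intro i hi
    simp [hp i hi, hσ i hi]
  · intro σ hσ
    simp only [Finset.mem_filter, Finset.mem_univ, true_and] at hσ ⊢
    intro i hi
    have : p⁻¹ i = i := by rw [Perm.inv_eq_iff_eq, hp i hi]
    rw [Perm.mul_apply, this, hσ i hi]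
  · intro σ _; simp
  · intro σ _; simp
  · intro σ _; simp [map_mul]

lemma mul_asym6 (B : α → Prop) [DecidablePred B] (p : Perm α) (hp : ∀ i, ¬ B i → p i = i) :
    MonoidAlgebra.of ℚ _ p * asym6 B = ((Perm.sign p : ℤ) : ℚ) • asym6 B := by
  unfold asym6
  rw [Finset.mul_sum, Finset.smul_sum]
  refine Finset.sum_nbij' (fun σ => p * σ) (fun σ => p⁻¹ * σ) ?_ ?_ ?_ ?_ ?_
  · intro σ hσ
    simp only [Finset.mem_filter, Finset.mem_univ, true_and] at hσ ⊢
    intro i hi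
    simp [hp i hi, hσ i hi]
  · intro σ hσ
    simp only [Finset.mem_filter, Finset.mem_univ, true_and] at hσ ⊢
    intro i hi
    have : p⁻¹ i = i := by rw [Perm.inv_eq_iff_eq, hp i hi]
    rw [Perm.mul_apply, hσ i hi, this]
  · intro σ _; simp
  · intro σ _; simp
  · intro σ _
    rw [mul_smul_comm, smul_smul, ← map_mul, Perm.sign_mul]
    congr 1
    push_cast
    rw [← mul_assoc]
    rcases Int.units_eq_one_or (Perm.sign p) with h | h <;> simp [h]

lemma coset6 (B : α → Prop) [DecidablePred B] (b : α) (hb : B b) :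
    (1 + ∑ i ∈ Finset.univ.filter (fun i => ¬ B i), MonoidAlgebra.of ℚ (Perm α) (swap i b)) *
      sym6 B = sym6 (cut6 B b) := by
  have h1 : (1 + ∑ i ∈ Finset.univ.filter (fun i => ¬ B i),
      MonoidAlgebra.of ℚ (Perm α) (swap i b)) =
      ∑ i ∈ insert b (Finset.univ.filter (fun i => ¬ B i)),
        MonoidAlgebra.of ℚ (Perm α) (swap i b) := by
    rw [Finset.sum_insert (by simp [hb])]
    rw [swap_self]; rfl
  rw [h1]
  unfold sym6
  rw [Finset.sum_mul_sum, ← Finset.sum_product']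
  refine Finset.sum_nbij' (fun x => swap x.1 b * x.2) (fun σ => (σ b, swap (σ b) b * σ))
    ?_ ?_ ?_ ?_ ?_
  · rintro ⟨i, σ⟩ hσ
    simp only [Finset.mem_product, Finset.mem_insert, Finset.mem_filter, Finset.mem_univ,
      true_and] at hσ ⊢
    rintro k ⟨hk, hkb⟩
    rw [Perm.mul_apply, hσ.2 k hk]
    apply swap_apply_of_ne_of_ne _ hkb
    rintro rfl
    tauto
  · intro σ hσ
    simp only [Finset.mem_product, Finset.mem_insert, Finset.mem_filter, Finset.mem_univ,
      true_and] at hσ ⊢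
    constructor
    · by_contra! h
      have := hσ (σ b) ⟨h.2, h.1⟩
      exact h.1 (σ.injective this)
    · intro i hi
      rw [Perm.mul_apply]
      by_cases hib : i = b
      · subst hib; simp
      · rw [hσ i ⟨hi, hib⟩]
        refine swap_apply_of_ne_of_ne ?_ hib
        intro h
        have := hσ i ⟨hi, hib⟩
        exact hib (σ.injective (this.trans h))
  · rintro ⟨i, σ⟩ hσ
    simp only [Finset.mem_product, Finset.mem_insert, Finset.mem_filter, Finset.mem_univ,
      true_and] at hσ ⊢
    have := hσ.2 b hb
    simp [this, ← mul_assoc]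
  · intro σ _
    simp [← mul_assoc]
  · rintro ⟨i, σ⟩ _
    simp [map_mul]

lemma key6 (B : α → Prop) [DecidablePred B] (b : α) (hb : B b) (g : Perm α) :
    ∃ c : ℚ, sym6 (cut6 B b) * MonoidAlgebra.of ℚ _ g * asym6 B =
      c • (sym6 (cut6 B b) * asym6 B) := by
  by_cases H : ∃ x y, x ≠ y ∧ B x ∧ B y ∧ ¬ cut6 B b (g x) ∧ ¬ cut6 B b (g y)
  · obtain ⟨x, y, hxy, hx, hy, hgx, hgy⟩ := H
    refine ⟨0, ?_⟩
    have e1 : sym6 (cut6 B b) * MonoidAlgebra.of ℚ _ (swap (g x) (g y)) = sym6 (cut6 B b) := by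
      apply sym6_mul
      intro i hi
      apply swap_apply_of_ne_of_ne <;> rintro rfl <;> contradiction
    have e2 : MonoidAlgebra.of ℚ _ (swap x y) * asym6 B = - asym6 B := by
      rw [mul_asym6]
      · simp [Perm.sign_swap hxy]
      · intro i hi
        apply swap_apply_of_ne_of_ne <;> rintro rfl <;> contradiction
    have e3 : swap (g x) (g y) * g = g * swap x y := by
      ext i
      simp [Equiv.swap_apply_def]
      split_ifs <;> simp_all
    have e4 : sym6 (cut6 B b) * MonoidAlgebra.of ℚ _ g * asym6 B =
        - (sym6 (cut6 B b) * MonoidAlgebra.of ℚ _ g * asym6 B) := by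
      calc _ = sym6 (cut6 B b) * MonoidAlgebra.of ℚ _ (swap (g x) (g y)) *
              MonoidAlgebra.of ℚ _ g * asym6 B := by rw [e1]
        _ = sym6 (cut6 B b) * MonoidAlgebra.of ℚ _ g *
              (MonoidAlgebra.of ℚ _ (swap x y) * asym6 B) := by
            rw [mul_assoc (sym6 _), ← map_mul, e3, map_mul]
            simp only [mul_assoc]
        _ = _ := by rw [e2, mul_neg]
    rw [zero_smul]
    have e5 : (2 : ℚ) • (sym6 (cut6 B b) * MonoidAlgebra.of ℚ _ g * asym6 B) = 0 := by
      rw [two_smul]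
      nth_rewrite 1 [e4]
      exact neg_add_cancel _
    exact (smul_eq_zero.mp e5).resolve_left (by norm_num)
  · push Not at H
    have hex : ∃ x, B x ∧ ¬ cut6 B b (g x) := by
      by_contra! h
      let S := Finset.univ.filter (fun i => B i)
      have hsub : S.image g ⊆ S.erase b := by
        intro i hi
        obtain ⟨k, hk, rfl⟩ := Finset.mem_image.mp hi
        have := h k (by simpa [S] using hk)
        simp [S, this.1, this.2]
      have := Finset.card_le_card hsub
      rw [Finset.card_image_of_injective _ g.injective] at this
      have h2 : (S.erase b).card < S.card := Finset.card_erase_lt_of_mem (by simp [S, hb])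
      omega
    obtain ⟨x, hx, hgx⟩ := hex
    set h : Perm α := swap (g x) b * g with hh
    have hB : ∀ y, B y → B (h y) := by
      intro y hy
      by_cases hxy : y = x
      · subst hxy; simp [hh, hb]
      · have := H x y (Ne.symm hxy) hx hy hgx
        rw [hh, Perm.mul_apply, swap_apply_of_ne_of_ne (by simpa using hxy) this.2]
        exact this.1
    have hB' : ∀ y, B (h y) ↔ B y := by
      intro y
      refine ⟨fun hy => ?_, hB y⟩
      let S := Finset.univ.filter (fun i => B i)
      have hsub : S.image h ⊆ S := by
        intro i hi
        obtain ⟨k, hk, rfl⟩ := Finset.mem_image.mp hi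
        simpa [S] using hB k (by simpa [S] using hk)
      have heq := Finset.eq_of_subset_of_card_le hsub
        (by rw [Finset.card_image_of_injective _ h.injective])
      have hm : h y ∈ S.image h := by rw [heq]; simpa [S] using hy
      obtain ⟨k, hk, hky⟩ := Finset.mem_image.mp hm
      rw [← h.injective hky]
      simpa [S] using hk
    let q : Perm α := Perm.ofSubtype (h.subtypePerm hB')
    have hq1 : ∀ i, B i → q i = h i := by
      intro i hi
      simp [q, Perm.ofSubtype_apply_of_mem _ hi]
    have hq2 : ∀ i, ¬ B i → q i = i := by
      intro i hi
      simp [q, Perm.ofSubtype_apply_of_not_mem _ hi]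
    let p : Perm α := h * q⁻¹
    have hp : ∀ i, B i → p i = i := by
      intro i hi
      have h1 : B (h⁻¹ i) := by rw [← hB']; simpa using hi
      have : q⁻¹ i = h⁻¹ i := by
        rw [Perm.inv_eq_iff_eq, hq1 _ h1]; simp
      show h (q⁻¹ i) = i
      rw [this]; simp
    have hg : g = swap (g x) b * p * q := by
      simp [p, hh, ← mul_assoc]
    refine ⟨((Perm.sign q : ℤ) : ℚ), ?_⟩
    rw [hg, map_mul, ← mul_assoc, mul_assoc _ (MonoidAlgebra.of ℚ _ q), mul_asym6 B q hq2,
      sym6_mul, mul_smul_comm]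
    rintro i ⟨hi, hib⟩
    rw [Perm.mul_apply, hp i hi]
    refine swap_apply_of_ne_of_ne ?_ hib
    rintro rfl
    exact hgx ⟨hi, hib⟩

lemma ne6 (B : α → Prop) [DecidablePred B] (b : α) :
    sym6 (cut6 B b) * asym6 B ≠ 0 := by
  intro h0
  have : (sym6 (cut6 B b) * asym6 B).coeff 1 = 1 := by
    unfold sym6 asym6
    rw [Finset.sum_mul_sum]
    simp only [MonoidAlgebra.of_apply, MonoidAlgebra.smul_single, MonoidAlgebra.single_mul_single]
    simp only [MonoidAlgebra.coeff_sum, MonoidAlgebra.coeff_single, Finsupp.finsetSum_apply,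
      Finsupp.single_apply]
    rw [Finset.sum_eq_single 1, Finset.sum_eq_single 1]
    · simp
    · intro q _ hq
      simp [hq]
    · simp
    · intro p hp hp1
      apply Finset.sum_eq_zero
      intro q hq
      simp only [Finset.mem_filter, Finset.mem_univ, true_and] at hp hq
      rw [if_neg]
      intro hpq
      have hpq' : p = q⁻¹ := eq_inv_of_mul_eq_one_left hpq
      apply hp1
      have hne : ∀ i, i ≠ b → p i = i := by
        intro i hi
        by_cases hB : B i
        · exact hp i ⟨hB, hi⟩
        · rw [hpq', Perm.inv_eq_iff_eq, hq i hB]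
      ext i
      by_cases hi : i = b
      · subst hi
        by_contra hc
        exact hc (p.injective (hne (p i) hc))
      · simpa using hne i hi
    · simp
  rw [h0] at this
  simp at this

lemma simple6 {G : Type} [Group G] [Finite G] (a b : MonoidAlgebra ℚ G) (hne : a * b ≠ 0)
    (key : ∀ g : G, ∃ c : ℚ, a * MonoidAlgebra.of ℚ _ g * b = c • (a * b)) :
    IsSimpleModule (MonoidAlgebra ℚ G) ↥(Ideal.span {a * b}) := by
  have key' : ∀ x : MonoidAlgebra ℚ G, ∃ c : ℚ, a * x * b = c • (a * b) := by
    intro x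
    induction x using MonoidAlgebra.induction_on with
    | of g => exact key g
    | add x y hx hy =>
      obtain ⟨c, hc⟩ := hx
      obtain ⟨d, hd⟩ := hy
      exact ⟨c + d, by rw [mul_add, add_mul, hc, hd, add_smul]⟩
    | smul r x hx =>
      obtain ⟨c, hc⟩ := hx
      exact ⟨r * c, by rw [mul_smul_comm, smul_mul_assoc, hc, smul_smul]⟩
  rw [isSimpleModule_iff_isAtom]
  constructor
  · intro h
    exact hne (by simpa using h)
  · intro L hL
    by_contra hL0
    apply hL.not_ge
    rw [Ideal.span_le, Set.singleton_subset_iff]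
    by_cases hx : ∃ x ∈ L, a * b * x ≠ 0
    · obtain ⟨x, hxL, hx0⟩ := hx
      obtain ⟨u, rfl⟩ := Ideal.mem_span_singleton'.mp (hL.le hxL)
      obtain ⟨c, hc⟩ := key' (b * u * a)
      have e : a * b * (u * (a * b)) = c • (a * b) := by
        rw [← hc]; simp only [mul_assoc]
      have hc0 : c ≠ 0 := by
        rintro rfl
        rw [e, zero_smul] at hx0
        exact hx0 rfl
      have h1 : c • (a * b) ∈ L := by
        rw [← e]; exact Ideal.mul_mem_left _ _ hxL
      have h2 : a * b = (c⁻¹ • (1 : MonoidAlgebra ℚ G)) * (c • (a * b)) := by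
        rw [smul_mul_assoc, one_mul, smul_smul, inv_mul_cancel₀ hc0, one_smul]
      show a * b ∈ L
      rw [h2]
      exact Ideal.mul_mem_left _ _ h1
    · exfalso
      push Not at hx
      apply hL0
      obtain ⟨L', hc⟩ := exists_isCompl L
      have h1 : (1 : MonoidAlgebra ℚ G) ∈ L ⊔ L' := by rw [hc.sup_eq_top]; trivial
      obtain ⟨e, he, e', he', hee⟩ := Submodule.mem_sup.mp h1
      have hxe : ∀ x ∈ L, x = x * e := by
        intro x hxL
        have h2 : x - x * e = x * e' := by
          rw [sub_eq_iff_eq_add, ← mul_add, add_comm e', hee, mul_one]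
        have h3 : x - x * e ∈ L ⊓ L' :=
          ⟨Submodule.sub_mem _ hxL (Ideal.mul_mem_left _ _ he),
            by rw [h2]; exact Ideal.mul_mem_left _ _ he'⟩
        rw [hc.inf_eq_bot] at h3
        exact sub_eq_zero.mp (by simpa using h3)
      have he0 : e = 0 := by
        obtain ⟨u, hu⟩ := Ideal.mem_span_singleton'.mp (hL.le he)
        rw [hxe e he]
        nth_rewrite 1 [← hu]
        rw [mul_assoc, hx e he, mul_zero]
      rw [eq_bot_iff]
      intro x hxL
      rw [hxe x hxL, he0, mul_zero]
      exact Submodule.zero_mem _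

end GroupAlg
section ExtPow
set_option linter.unusedSectionVars false
open Equiv

/-- projection of the coordinate vector `e_i` to `U_N` -/
def ebar6 (N : ℕ) (i : Fin N) : ↥(U N) :=
  ⟨Pi.single i 1 - (fun _ => (1 : ℚ) / N), by
    have : (N : ℚ) ≠ 0 := by
      have := i.pos
      positivity
    rw [mem_U]
    simp [Finset.sum_sub_distrib]
    field_simp
    simp⟩

lemma permU_ebar6 (N : ℕ) (g : Perm (Fin N)) (i : Fin N) :
    permU N g (ebar6 N i) = ebar6 N (g i) := by
  ext k
  simp only [permU, permMap, ebar6, LinearMap.coe_restrict_apply, LinearMap.funLeft_apply,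
    Pi.sub_apply, Pi.single_apply, Perm.inv_eq_iff_eq]

lemma sum_ebar6 (N : ℕ) : ∑ i, ebar6 N i = 0 := by
  ext k
  have : (N : ℚ) ≠ 0 := by
    have := k.pos
    positivity
  simp [ebar6, Finset.sum_sub_distrib, Pi.single_apply, this]

lemma span_ebar6 (N : ℕ) : Submodule.span ℚ (Set.range (ebar6 N)) = ⊤ := by
  rw [eq_top_iff]
  rintro x -
  have hx := (mem_U _).mp x.2
  have : x = ∑ i, (x : Fin N → ℚ) i • ebar6 N i := by
    ext k
    simp only [ebar6, Submodule.coe_sum, Submodule.coe_smul, Finset.sum_apply, Pi.smul_apply,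
      Pi.sub_apply, Pi.single_apply, smul_eq_mul, mul_sub, Finset.sum_sub_distrib,
      ← Finset.sum_mul, hx]
    simp
  rw [this]
  exact Submodule.sum_mem _ fun i _ => Submodule.smul_mem _ _
    (Submodule.subset_span (Set.mem_range_self i))

/-- the representation on the exterior power -/
def rho6 (N k : ℕ) : Representation ℚ (Perm (Fin N)) ↥(⋀[ℚ]^k ↥(U N)) where
  toFun g := exteriorPower.map k (permU N g)
  map_one' := by
    have : permU N 1 = LinearMap.id := by
      ext x k; simp [permU, permMap, LinearMap.funLeft_apply]
    rw [this, exteriorPower.map_id]; rfl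
  map_mul' g h := by
    have : permU N (g * h) = permU N g ∘ₗ permU N h := by
      ext x k; simp [permU, permMap, LinearMap.funLeft_apply]
    rw [this, exteriorPower.map_comp]; rfl

lemma rho6_coe (N k : ℕ) (g : Perm (Fin N)) (x : ↥(⋀[ℚ]^k ↥(U N))) :
    ((rho6 N k g x : ↥(⋀[ℚ]^k ↥(U N))) : ExteriorAlgebra ℚ ↥(U N)) = act N g x := by
  have : (Submodule.subtype _) ∘ₗ (rho6 N k g) = act N g ∘ₗ (Submodule.subtype (⋀[ℚ]^k ↥(U N))) := by
    apply exteriorPower.linearMap_ext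
    ext m
    simp [rho6, act, exteriorPower.map_apply_ιMulti, ExteriorAlgebra.map_apply_ιMulti]
  exact LinearMap.congr_fun this x

variable {N k : ℕ} {C : Fin N → Prop} (e : Fin k ≃ {i // C i})

/-- wedge indexed by the subtype of `C` -/
def wedge6 : ↥(U N) [⋀^{i // C i}]→ₗ[ℚ] ↥(⋀[ℚ]^k ↥(U N)) :=
  (exteriorPower.ιMulti ℚ k).domDomCongr e

lemma rho6_wedge (g : Perm (Fin N)) (s : {i // C i} → Fin N) :
    rho6 N k g (wedge6 e (fun i => ebar6 N (s i))) = wedge6 e (fun i => ebar6 N (g (s i))) := by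
  simp only [wedge6, AlternatingMap.domDomCongr_apply, rho6, MonoidHom.coe_mk, OneHom.coe_mk,
    exteriorPower.map_apply_ιMulti]
  congr 1
  ext i : 1
  simp [permU_ebar6]

/-- the highest weight like vector -/
def w6 : ↥(⋀[ℚ]^k ↥(U N)) := wedge6 e (fun i => ebar6 N i)

lemma rho6_w (g : Perm (Fin N)) : rho6 N k g (w6 e) = wedge6 e (fun i => ebar6 N (g i)) :=
  rho6_wedge e g _

lemma span_w6 (L : Submodule ℚ ↥(⋀[ℚ]^k ↥(U N))) (h : ∀ g, rho6 N k g (w6 e) ∈ L) : L = ⊤ := by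
  classical
  rw [eq_top_iff, ← exteriorPower.ιMulti_span_of_span ℚ k _ (span_ebar6 N), Submodule.span_le]
  rintro _ ⟨a, ha, rfl⟩
  have : ∀ i, ∃ s, ebar6 N s = a i := fun i => ha (Set.mem_range_self i)
  choose s hs using this
  by_cases hinj : Function.Injective s
  · let s' : {i // C i} ≃ {i // i ∈ Set.range s} :=
      e.symm.trans (Equiv.ofInjective s hinj)
    have := h s'.extendSubtype
    rw [rho6_w] at this
    simp only [wedge6, AlternatingMap.domDomCongr_apply] at this
    have ha' : a = (fun i : {i // C i} => ebar6 N (s'.extendSubtype i)) ∘ e := ?_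
    · rw [ha']; exact this
    ext i : 1
    rw [Function.comp_apply, Equiv.extendSubtype_apply_of_mem _ _ (e i).2]
    simp [s', hs]
  · rw [Function.Injective] at hinj
    push Not at hinj
    obtain ⟨i, j, hij, hne⟩ := hinj
    rw [AlternatingMap.map_eq_zero_of_eq _ a (i := i) (j := j) (by rw [← hs, ← hs, hij]) hne]
    exact L.zero_mem

variable [DecidablePred C]

lemma rho6_w_fix (g : Perm (Fin N)) (hg : ∀ i, C i → g i = i) : rho6 N k g (w6 e) = w6 e := by
  rw [rho6_w, w6]
  congr 1
  ext i : 1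
  rw [hg i i.2]

lemma rho6_w_sign (g : Perm (Fin N)) (hg : ∀ i, ¬ C i → g i = i) :
    rho6 N k g (w6 e) = ((Perm.sign g : ℤ) : ℚ) • w6 e := by
  have hC : ∀ i, C (g i) ↔ C i := by
    intro i
    by_cases h : C i
    · refine iff_of_true ?_ h
      by_contra h'
      have := g.injective (hg _ h')
      rw [this] at h'
      exact h' h
    · rw [hg i h]
  have := (wedge6 e).map_perm (fun i => ebar6 N i) (g.subtypePerm hC)
  rw [Perm.sign_subtypePerm _ _ (fun x hx => by by_contra h; exact hx (hg x h))] at this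
  rw [rho6_w, w6]
  refine this.trans ?_
  rcases Int.units_eq_one_or (Perm.sign g) with h | h <;> simp [h]
  exact (neg_one_smul ℚ _).symm

lemma rho6_w_update (g : Perm (Fin N)) (c : {i // C i}) (hg : ∀ i, C i → i ≠ c → g i = i) :
    rho6 N k g (w6 e) = wedge6 e (Function.update (fun i => ebar6 N i) c (ebar6 N (g c))) := by
  rw [rho6_w]
  congr 1
  ext i : 1
  by_cases h : i = c
  · subst h; simp
  · rw [Function.update_of_ne h, hg i i.2 (fun h' => h (Subtype.ext h'))]

lemma sum_update6 (c : {i // C i}) :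
    ∑ i ∈ Finset.univ.filter (fun i => ¬ C i),
      wedge6 e (Function.update (fun i => ebar6 N i) c (ebar6 N i)) = - w6 e := by
  rw [← AlternatingMap.map_update_sum]
  have h0 := sum_ebar6 N
  rw [← Finset.sum_filter_not_add_sum_filter _ C, Finset.sum_subtype (p := C) (F := inferInstance) (Finset.univ.filter C) (by simp)] at h0
  rw [eq_neg_of_add_eq_zero_left h0, AlternatingMap.map_update_neg, AlternatingMap.map_update_sum,
    Finset.sum_eq_single c]
  · rw [Function.update_eq_self c (fun i : {i // C i} => ebar6 N i)]; rfl
  · intro d _ hd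
    exact AlternatingMap.map_update_self _ (fun i : {i // C i} => ebar6 N i) (Ne.symm hd)
  · simp
end ExtPow
section Main
open Equiv

lemma asym_w6 {N k : ℕ} {B : Fin N → Prop} [DecidablePred B] (b : Fin N) (hb : B b)
    (e : Fin k ≃ {i // cut6 B b i}) :
    ∃ μ : ℚ, 0 < μ ∧ (rho6 N k).asAlgebraHom (asym6 B) (w6 e) =
      μ • (w6 e - ∑ c : {i // cut6 B b i}, rho6 N k (swap (c : Fin N) b) (w6 e)) := by
  let T := Finset.univ.filter (fun τ : Perm (Fin N) => ∀ i, ¬ B i → τ i = i)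
  let S := Finset.univ.filter (fun i => B i)
  let h : Fin N → ↥(⋀[ℚ]^k ↥(U N)) :=
    fun c => if c = b then w6 e else - rho6 N k (swap c b) (w6 e)
  have hT : ∀ τ ∈ T, ∀ i, B (τ i) ↔ B i := by
    intro τ hτ i
    have hτ' : ∀ i, ¬ B i → τ i = i := by simpa [T] using hτ
    by_cases h : B i
    · refine iff_of_true ?_ h
      by_contra h'
      have := τ.injective (hτ' _ h')
      rw [this] at h'
      exact h' h
    · rw [hτ' i h]
  have h1 : (rho6 N k).asAlgebraHom (asym6 B) (w6 e) = ∑ τ ∈ T, h (τ b) := by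
    unfold asym6
    rw [map_sum, LinearMap.sum_apply]
    refine Finset.sum_congr (by ext; simp [T]) fun τ hτ => ?_
    rw [map_smul, Representation.asAlgebraHom_of, LinearMap.smul_apply]
    have hτ' : ∀ i, ¬ B i → τ i = i := by simpa [T] using hτ
    have h2 := rho6_w_sign e (swap (τ b) b * τ) (by
      intro i hi
      rw [Perm.mul_apply]
      by_cases hib : i = b
      · subst hib; simp
      · have hB : ¬ B i := fun h => hi ⟨h, hib⟩
        rw [hτ' i hB]
        refine swap_apply_of_ne_of_ne ?_ hib
        rintro rfl
        exact hB ((hT τ hτ b).mpr hb))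
    have h3 : τ = swap (τ b) b * (swap (τ b) b * τ) := by simp [← mul_assoc]
    have h4 : rho6 N k τ (w6 e) = ((Perm.sign (swap (τ b) b * τ) : ℤ) : ℚ) •
        rho6 N k (swap (τ b) b) (w6 e) := by
      conv_lhs => rw [h3, map_mul, Module.End.mul_apply, h2, map_smul]
    rw [h4, smul_smul]
    simp only [h]
    by_cases hτb : τ b = b
    · rw [if_pos hτb, hτb, swap_self]
      have : rho6 N k (Equiv.refl (Fin N)) (w6 e) = w6 e := rho6_w_fix e _ (fun _ _ => rfl)
      rw [this]
      change (((Perm.sign τ : ℤ) : ℚ) * ((Perm.sign (1 * τ) : ℤ) : ℚ)) • w6 e = w6 e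
      rcases Int.units_eq_one_or (Perm.sign τ) with h | h <;> simp [h]
    · rw [if_neg hτb, Perm.sign_mul, Perm.sign_swap hτb]
      rcases Int.units_eq_one_or (Perm.sign τ) with h | h <;> simp [h]
  have h2 : (S.card : ℚ) • ∑ τ ∈ T, h (τ b) = (T.card : ℚ) • ∑ c ∈ S, h c := by
    have h3 : ∀ c ∈ S, ∑ τ ∈ T, h (τ b) = ∑ τ ∈ T, h (τ c) := by
      intro c hc
      have hc' : B c := by simpa [S] using hc
      have hs : ∀ i, ¬ B i → swap b c i = i := by
        intro i hi
        apply swap_apply_of_ne_of_ne <;> rintro rfl <;> contradiction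
      have hmem : ∀ τ ∈ T, τ * swap b c ∈ T := by
        intro τ hτ
        simp only [T, Finset.mem_filter, Finset.mem_univ, true_and] at hτ ⊢
        intro i hi
        rw [Perm.mul_apply, hs i hi, hτ i hi]
      refine Finset.sum_nbij' (fun τ => τ * swap b c) (fun τ => τ * swap b c) hmem hmem ?_ ?_ ?_
      · intro τ _; simp [mul_assoc]
      · intro τ _; simp [mul_assoc]
      · intro τ _; simp
    have h4 : ∀ τ ∈ T, ∑ c ∈ S, h (τ c) = ∑ c ∈ S, h c := by
      intro τ hτ
      refine Finset.sum_nbij' (fun c => τ c) (fun c => τ⁻¹ c) ?_ ?_ ?_ ?_ ?_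
      · intro c hc
        simpa [S, hT τ hτ] using hc
      · intro c hc
        have := hT τ hτ (τ⁻¹ c)
        simp only [S, Finset.mem_filter, Finset.mem_univ, true_and] at hc ⊢
        rw [← this]; simpa using hc
      · intro c _; simp
      · intro c _; simp
      · intro c _; rfl
    calc (S.card : ℚ) • ∑ τ ∈ T, h (τ b) = ∑ c ∈ S, ∑ τ ∈ T, h (τ b) := by
          rw [Finset.sum_const, Nat.cast_smul_eq_nsmul]
      _ = ∑ c ∈ S, ∑ τ ∈ T, h (τ c) := Finset.sum_congr rfl h3
      _ = ∑ τ ∈ T, ∑ c ∈ S, h (τ c) := Finset.sum_comm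
      _ = ∑ τ ∈ T, ∑ c ∈ S, h c := Finset.sum_congr rfl h4
      _ = _ := by rw [Finset.sum_const, Nat.cast_smul_eq_nsmul]
  have h5 : ∑ c ∈ S, h c =
      w6 e - ∑ c : {i // cut6 B b i}, rho6 N k (swap (c : Fin N) b) (w6 e) := by
    have hbS : b ∈ S := by simp [S, hb]
    rw [← Finset.add_sum_erase _ _ hbS, sub_eq_add_neg, ← Finset.sum_neg_distrib,
      Finset.sum_subtype (p := cut6 B b) (S.erase b) (by simp [S, and_comm])]
    congr 1
    · simp [h]
    · refine Finset.sum_congr rfl fun c _ => ?_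
      simp only [h]
      rw [if_neg c.2.2]
  have hS0 : (0 : ℚ) < S.card := by
    have : 0 < S.card := Finset.card_pos.mpr ⟨b, by simp [S, hb]⟩
    exact_mod_cast this
  have hT0 : (0 : ℚ) < T.card := by
    have : 0 < T.card := Finset.card_pos.mpr ⟨1, by simp [T]⟩
    exact_mod_cast this
  refine ⟨(S.card : ℚ)⁻¹ * T.card, by positivity, ?_⟩
  rw [h1, ← h5, mul_smul, ← h2, smul_smul, inv_mul_cancel₀ hS0.ne', one_smul]

lemma z_w6 {N k : ℕ} {B : Fin N → Prop} [DecidablePred B] (b : Fin N) (hb : B b)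
    (e : Fin k ≃ {i // cut6 B b i}) :
    ∃ μ : ℚ, 0 < μ ∧ (rho6 N k).asAlgebraHom
      ((1 + ∑ i ∈ Finset.univ.filter (fun i => ¬ B i),
        MonoidAlgebra.of ℚ (Perm (Fin N)) (swap i b)) * (sym6 B * asym6 B)) (w6 e) =
      μ • w6 e := by
  obtain ⟨μ, hμ, h1⟩ := asym_w6 b hb e
  set u := w6 e - ∑ c : {i // cut6 B b i}, rho6 N k (swap (c : Fin N) b) (w6 e) with hu
  let T' := Finset.univ.filter (fun σ : Perm (Fin N) => ∀ i, B i → σ i = i)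
  have h2 : (rho6 N k).asAlgebraHom (sym6 B) u = (T'.card : ℚ) • u := by
    unfold sym6
    rw [map_sum, LinearMap.sum_apply, Nat.cast_smul_eq_nsmul, ← Finset.sum_const]
    refine Finset.sum_congr (by ext; simp [T']) fun σ hσ => ?_
    have hσ' : ∀ i, B i → σ i = i := by simpa [T'] using hσ
    have hw : rho6 N k σ (w6 e) = w6 e := rho6_w_fix e σ (fun i hi => hσ' i hi.1)
    rw [Representation.asAlgebraHom_of, hu, map_sub, map_sum, hw]
    congr 1
    refine Finset.sum_congr rfl fun c _ => ?_
    have hcomm : σ * swap (c : Fin N) b = swap (c : Fin N) b * σ := by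
      have h := Equiv.mul_swap_eq_swap_mul σ (c : Fin N) b
      rw [hσ' c c.2.1, hσ' b hb] at h
      exact h
    rw [← Module.End.mul_apply, ← map_mul, hcomm, map_mul, Module.End.mul_apply, hw]
  let A := Finset.univ.filter (fun i => ¬ cut6 B b i)
  have hA : A = insert b (Finset.univ.filter (fun i => ¬ B i)) := by
    ext i
    simp only [A, Finset.mem_filter, Finset.mem_univ, true_and, Finset.mem_insert, cut6]
    tauto
  have h3 : (1 + ∑ i ∈ Finset.univ.filter (fun i => ¬ B i),
        MonoidAlgebra.of ℚ (Perm (Fin N)) (swap i b)) =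
        ∑ i ∈ A, MonoidAlgebra.of ℚ (Perm (Fin N)) (swap i b) := by
    rw [hA, Finset.sum_insert (by simp [hb]), swap_self]; rfl
  have h4 : (rho6 N k).asAlgebraHom
      (∑ i ∈ A, MonoidAlgebra.of ℚ (Perm (Fin N)) (swap i b)) u =
      ((A.card : ℚ) + Fintype.card {i // cut6 B b i}) • w6 e := by
    rw [map_sum, LinearMap.sum_apply]
    have h5 : ∀ i ∈ A, (rho6 N k).asAlgebraHom (MonoidAlgebra.of ℚ (Perm (Fin N)) (swap i b)) u =
        w6 e - ∑ c : {i // cut6 B b i},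
          wedge6 e (Function.update (fun i => ebar6 N i) c (ebar6 N i)) := by
      intro i hi
      have hi' : ¬ cut6 B b i := by simpa only [A, Finset.mem_filter, Finset.mem_univ, true_and] using hi
      have hsw : ∀ d, cut6 B b d → swap i b d = d := by
        intro d hd
        refine swap_apply_of_ne_of_ne ?_ hd.2
        rintro rfl
        exact hi' hd
      rw [Representation.asAlgebraHom_of, hu, map_sub, map_sum, rho6_w_fix e _ hsw]
      congr 1
      refine Finset.sum_congr rfl fun c _ => ?_
      rw [← Module.End.mul_apply, ← map_mul, rho6_w_update e _ c]
      · congr 3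
        simp
      · intro d hd hdc
        rw [Perm.mul_apply, swap_apply_of_ne_of_ne hdc hd.2, hsw d hd]
    rw [Finset.sum_congr rfl h5, Finset.sum_sub_distrib, Finset.sum_comm, Finset.sum_const,
      Finset.sum_congr rfl (fun c _ => sum_update6 e c), Finset.sum_const, add_smul,
      Nat.cast_smul_eq_nsmul, Nat.cast_smul_eq_nsmul, Finset.card_univ, smul_neg, sub_neg_eq_add]
  have hA0 : (0 : ℚ) < A.card := by
    have : 0 < A.card := Finset.card_pos.mpr ⟨b, by simp [A]⟩
    exact_mod_cast this
  have hT0 : (0 : ℚ) < T'.card := by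
    have : 0 < T'.card := Finset.card_pos.mpr ⟨1, by simp [T']⟩
    exact_mod_cast this
  refine ⟨μ * T'.card * ((A.card : ℚ) + Fintype.card {i // cut6 B b i}), by positivity, ?_⟩
  rw [h3, map_mul, map_mul, Module.End.mul_apply, Module.End.mul_apply, h1, map_smul, h2,
    map_smul, map_smul, h4, smul_smul, smul_smul, mul_assoc]

lemma iso6 {N k : ℕ} (z : MonoidAlgebra ℚ (Perm (Fin N)))
    (hs : IsSimpleModule (MonoidAlgebra ℚ (Perm (Fin N))) ↥(Ideal.span {z}))
    (w : ↥(⋀[ℚ]^k ↥(U N))) (hspan : ∀ L : Submodule ℚ ↥(⋀[ℚ]^k ↥(U N)),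
      (∀ g, rho6 N k g w ∈ L) → L = ⊤) (μ : ℚ) (hμ : μ ≠ 0)
    (hz : (rho6 N k).asAlgebraHom z w = μ • w) (hw : w ≠ 0) :
    ∃ e : ↥(Ideal.span {z}) ≃ₗ[ℚ] ↥(⋀[ℚ]^k ↥(U N)),
      ∀ (g : Perm (Fin N)) (x : MonoidAlgebra ℚ (Perm (Fin N)))
        (hx : x ∈ Ideal.span {z}),
        ((e ⟨MonoidAlgebra.of ℚ _ g * x, Ideal.mul_mem_left _ _ hx⟩ :
            ↥(⋀[ℚ]^k ↥(U N))) : ExteriorAlgebra ℚ ↥(U N))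
          = act N g ((e ⟨x, hx⟩ : ↥(⋀[ℚ]^k ↥(U N))) :
              ExteriorAlgebra ℚ ↥(U N)) := by
  let Φ : ↥(Ideal.span {z}) →ₗ[ℚ] ↥(⋀[ℚ]^k ↥(U N)) :=
    { toFun := fun x => (rho6 N k).asAlgebraHom (x : MonoidAlgebra ℚ (Perm (Fin N))) w
      map_add' := fun x y => by simp
      map_smul' := fun r x => by simp }
  have hΦ : ∀ x, Φ x = (rho6 N k).asAlgebraHom (x : MonoidAlgebra ℚ (Perm (Fin N))) w :=
    fun _ => rfl
  have hzm : z ∈ Ideal.span {z} := Ideal.mem_span_singleton_self z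
  have hsurj : Function.Surjective Φ := by
    rw [← LinearMap.range_eq_top]
    apply hspan
    intro g
    refine ⟨μ⁻¹ • ⟨MonoidAlgebra.of ℚ _ g * z, Ideal.mul_mem_left _ _ hzm⟩, ?_⟩
    rw [map_smul, hΦ]
    simp only [map_mul, Module.End.mul_apply, hz, Representation.asAlgebraHom_of, map_smul,
      smul_smul, inv_mul_cancel₀ hμ, one_smul]
  let K : Submodule (MonoidAlgebra ℚ (Perm (Fin N))) ↥(Ideal.span {z}) :=
    { carrier := {x | Φ x = 0}
      add_mem' := fun {x y} hx hy => by
        simp only [Set.mem_ofPred_eq] at *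
        rw [map_add, hx, hy, add_zero]
      zero_mem' := map_zero Φ
      smul_mem' := fun r x hx => by
        simp only [Set.mem_ofPred_eq, hΦ, Submodule.coe_smul, smul_eq_mul, map_mul,
          Module.End.mul_apply] at *
        rw [hx, map_zero] }
  have hinj : Function.Injective Φ := by
    rw [← LinearMap.ker_eq_bot, eq_bot_iff]
    intro x hx
    rcases eq_bot_or_eq_top K with hK | hK
    · have : x ∈ K := hx
      rw [hK] at this
      simpa using this
    · exfalso
      have : (⟨z, hzm⟩ : ↥(Ideal.span {z})) ∈ K := by rw [hK]; trivial
      have h0 : (rho6 N k).asAlgebraHom z w = 0 := this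
      rw [hz] at h0
      exact (smul_ne_zero hμ hw) h0
  refine ⟨LinearEquiv.ofBijective Φ ⟨hinj, hsurj⟩, ?_⟩
  intro g x hx
  rw [← rho6_coe]
  have : Φ ⟨MonoidAlgebra.of ℚ _ g * x, Ideal.mul_mem_left _ _ hx⟩ =
      rho6 N k g (Φ ⟨x, hx⟩) := by
    rw [hΦ, hΦ]
    simp only [map_mul, Module.End.mul_apply, Representation.asAlgebraHom_of]
  exact congrArg Subtype.val this

end Main
lemma w6_ne {N k : ℕ} {C : Fin N → Prop} (e : Fin k ≃ {i // C i}) (h : k + 1 ≤ N) :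
    w6 e ≠ 0 := by
  intro hw
  have hb := span_w6 e ⊥ (fun g => by simp [hw])
  have hU : Module.finrank ℚ ↥(U N) = N - 1 := by
    have hsur : LinearMap.range (sumMap N) = ⊤ := by
      rw [LinearMap.range_eq_top]
      intro r
      exact ⟨Pi.single ⟨0, by omega⟩ r, by simp [sumMap]⟩
    have := LinearMap.finrank_range_add_finrank_ker (sumMap N)
    rw [hsur, finrank_top] at this
    simp only [Module.finrank_self, Module.finrank_fin_fun] at this
    unfold U
    omega
  have h1 : Module.finrank ℚ ↥(⋀[ℚ]^k ↥(U N)) = (N - 1).choose k := by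
    rw [exteriorPower.finrank_eq, hU]
  have h2 : Module.finrank ℚ ↥(⋀[ℚ]^k ↥(U N)) = 0 := by
    rw [← finrank_top, ← hb, finrank_bot]
  have := Nat.choose_pos (n := N - 1) (k := k) (by omega)
  omega

end

noncomputable section

/-- For `t ≥ 2`, `j ≥ 1`, `G = S_{t+2j}` and
`z = (1 + (1 t+1) + ⋯ + (t t+1))·y ∈ ℚ[G]`, we have `z ≠ 0`, and the left ideal `ℚ[G]·z` is a
simple left `ℚ[G]`-module isomorphic to `Λ^{2j−1} U_{t+2j}` (i.e. there is a `ℚ`-linear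
equivalence commuting with the `G`-actions). -/
theorem stmt6 (t j : ℕ) (ht : 2 ≤ t) (hj : 1 ≤ j) :
    zElt t j hj ≠ 0 ∧
    IsSimpleModule (MonoidAlgebra ℚ (Equiv.Perm (Fin (t + 2*j))))
      ↥(Ideal.span {zElt t j hj}) ∧
    ∃ e : ↥(Ideal.span {zElt t j hj}) ≃ₗ[ℚ] ↥(⋀[ℚ]^(2*j-1) ↥(U (t + 2*j))),
      ∀ (g : Equiv.Perm (Fin (t + 2*j))) (x : MonoidAlgebra ℚ (Equiv.Perm (Fin (t + 2*j))))
        (hx : x ∈ Ideal.span {zElt t j hj}),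
        ((e ⟨MonoidAlgebra.of ℚ _ g * x, Ideal.mul_mem_left _ _ hx⟩ :
            ↥(⋀[ℚ]^(2*j-1) ↥(U (t + 2*j)))) : ExteriorAlgebra ℚ ↥(U (t + 2*j)))
          = act (t + 2*j) g ((e ⟨x, hx⟩ : ↥(⋀[ℚ]^(2*j-1) ↥(U (t + 2*j)))) :
              ExteriorAlgebra ℚ ↥(U (t + 2*j))) := by
  let B : Fin (t + 2*j) → Prop := fun i => t ≤ (i : ℕ)
  let b : Fin (t + 2*j) := ⟨t, by omega⟩
  have hb : B b := le_refl t
  have hz1 : zElt t j hj = (1 + ∑ i ∈ Finset.univ.filter (fun i => ¬ B i),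
      MonoidAlgebra.of ℚ (Equiv.Perm (Fin (t + 2*j))) (Equiv.swap i b)) *
        (sym6 B * asym6 B) := by
    have hy : yElt t j = sym6 B * asym6 B := by
      unfold yElt sym6 asym6
      congr 1
      · refine Finset.sum_congr ?_ fun _ _ => rfl
        ext τ
        simp [B]
      · refine Finset.sum_congr ?_ fun _ _ => rfl
        ext τ
        simp [B]
    unfold zElt
    rw [hy]
    congr 2
    refine Finset.sum_bij (fun i _ => Fin.castLE (by omega) i) ?_ ?_ ?_ ?_
    · intro i _
      simp [B]
    · intro i _ i' _ h
      simpa [Fin.ext_iff] using h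
    · intro i hi
      have : (i : ℕ) < t := by simpa [B] using hi
      exact ⟨⟨i, this⟩, Finset.mem_univ _, by ext; simp⟩
    · intro i _
      rfl
  have hz2 : zElt t j hj = sym6 (cut6 B b) * asym6 B := by
    rw [hz1, ← mul_assoc, coset6 B b hb]
  have hs : IsSimpleModule (MonoidAlgebra ℚ (Equiv.Perm (Fin (t + 2*j))))
      ↥(Ideal.span {zElt t j hj}) := by
    rw [hz2]
    exact simple6 _ _ (ne6 B b) (key6 B b hb)
  refine ⟨by rw [hz2]; exact ne6 B b, hs, ?_⟩
  have e : Fin (2*j-1) ≃ {i // cut6 B b i} :=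
    { toFun := fun i => ⟨⟨t + 1 + i, by omega⟩,
        ⟨by simp only [B]; omega, by simp only [b, ne_eq, Fin.mk.injEq]; omega⟩⟩
      invFun := fun i => ⟨(i : ℕ) - (t + 1), by
        obtain ⟨⟨i, hi⟩, h1, h2⟩ := i
        simp only [B, b, ne_eq, Fin.mk.injEq] at h1 h2 ⊢
        omega⟩
      left_inv := fun i => by
        ext
        simp
      right_inv := fun i => by
        obtain ⟨⟨i, hi⟩, h1, h2⟩ := i
        simp only [B, b, ne_eq, Fin.mk.injEq] at h1 h2
        simp only [Subtype.mk.injEq, Fin.mk.injEq]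
        omega }
  obtain ⟨μ, hμ, hw⟩ := z_w6 b hb e
  rw [← hz1] at hw
  exact iso6 (zElt t j hj) hs (w6 e) (span_w6 e) μ hμ.ne' hw (w6_ne e (by omega))

end
end
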